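/- arXiv:1612.04960 — 2 statements merged into one kernel-verified Lean document; each statement's English description precedes it below -/
import Mathlib

section
/- For integers k ≥ i ≥ 1, the number of partitions of n into parts not congruent to 2 mod 4 and not congruent to 0 or ±(2i−1) mod 4k equals the number of partitions λ = (1^{f_1}, 2^{f_2}, 3^{f_3}, …) of n satisfying f_1 + f_2 ≤ i−1, f_{2t+1} ≤ 1 for all t, and f_{2t} + f_{2t+1} + f_{2t+2} ≤ k−1 for all t. -/
/-!
The proof follows Andrews.  Put `q = X` and write `i = a + 1`, `k = a + b + 1`, so that
`a, b ≥ 0`.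

*Difference side.*  Let `G(a, b; N)` be the generating function of the partitions satisfying the
difference conditions with all parts `> 2 N`, where `f_{2N+1} + f_{2N+2} ≤ a`.  Sorting by the
values of `f_{2N+1}` and `f_{2N+2}` when their sum is maximal gives (`gf_rec`, `S_zero`)
`G(a+1, b; N) = G(a, b+1; N) + q^{(2N+2)(a+1)} G(b, a+1; N+1) + q^{2N+1+(2N+2)a} G(b+1, a; N+1)`
and `G(0, b; N) = G(b, 0; N+1)`.  As `G → 1` for `N → ∞`, these relations determine `G`.

*Andrews' series.*  The series `J_{k,i}(-1/q; q^{2N}; q²) = P ∑ₙ (αₙ - βₙ)`, where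
`P = (-q; q²)_∞ / (q²; q²)_∞`, satisfies the same relations: the differences of the `αₙ` at `N` are
combinations of the `βₙ₋₁` at `N + 1`, and those of the `βₙ` are combinations of the `αₙ` at `N + 1`
(`α_rec`, `β_rec`, `base_rec`).  It also tends to `1`, so it equals `G`.

*Product side.*  For `N = 0` the series is
`P ∑_{n ∈ ℤ} (-1)ⁿ q^{2kn² + (2k-2i+1)n}`, which the Jacobi triple product turns into
`P ∏ (1 - q^t)` over `t ≡ 0, ± (2i-1) mod 4k`.  Since `P = ∏_{t ≢ 2 mod 4} (1 - q^t)⁻¹`, this is the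
generating function of the partitions into allowed parts.

All sums and products are cut off and compared modulo `q^M` for arbitrary `M`, so no convergence
is needed; the triple product is used in the finite form given by the `q`-binomial theorem.
-/

/- The Andrews–Göllnitz–Gordon theorem.  A partition of `n` is modelled by its
multiplicity function `f : ℕ →₀ ℕ` (with `f 0 = 0`), where `f t` is the number
of occurrences of the part `t`, and `∑ t, t * f t = n`. -/

noncomputable section
open scoped Classical

/-- `f` is (the multiplicity function of) a partition of `n`. -/
def IsPartitionOf (n : ℕ) (f : ℕ →₀ ℕ) : Prop :=
  f 0 = 0 ∧ f.sum (fun t m => t * m) = n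

namespace AGG

open PowerSeries Finset

/-! ### Congruences between power series -/

/-- `CongMod M f g` says that the power series `f` and `g` agree modulo `X ^ M`. -/
def CongMod (M : ℕ) (f g : ℚ⟦X⟧) : Prop := (X : ℚ⟦X⟧) ^ M ∣ f - g

namespace CongMod

variable {M : ℕ} {f g h f' g' : ℚ⟦X⟧}

lemma of_eq (h : f = g) : CongMod M f g := by simp [CongMod, h]

lemma refl (f : ℚ⟦X⟧) : CongMod M f f := of_eq rfl

lemma symm (h : CongMod M f g) : CongMod M g f := by
  unfold CongMod at *
  rw [← neg_sub]
  exact (dvd_neg).2 h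

lemma trans (h₁ : CongMod M f g) (h₂ : CongMod M g h) : CongMod M f h := by
  unfold CongMod at *
  have := dvd_add h₁ h₂
  rwa [sub_add_sub_cancel] at this

lemma add (h₁ : CongMod M f g) (h₂ : CongMod M f' g') : CongMod M (f + f') (g + g') := by
  unfold CongMod at *
  rw [add_sub_add_comm]
  exact dvd_add h₁ h₂

lemma mul (h₁ : CongMod M f g) (h₂ : CongMod M f' g') : CongMod M (f * f') (g * g') := by
  unfold CongMod at *
  have : f * f' - g * g' = (f - g) * f' + g * (f' - g') := by ring
  rw [this]
  exact dvd_add (h₁.mul_right _) (h₂.mul_left _)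

lemma mul_left (c : ℚ⟦X⟧) (h : CongMod M f g) : CongMod M (c * f) (c * g) := (refl c).mul h

lemma mul_right (c : ℚ⟦X⟧) (h : CongMod M f g) : CongMod M (f * c) (g * c) := h.mul (refl c)

lemma mono {M' : ℕ} (hM : M' ≤ M) (h : CongMod M f g) : CongMod M' f g :=
  (pow_dvd_pow _ hM).trans h

lemma sum {s : Finset ℕ} {F G : ℕ → ℚ⟦X⟧} (h : ∀ i ∈ s, CongMod M (F i) (G i)) :
    CongMod M (∑ i ∈ s, F i) (∑ i ∈ s, G i) := by
  unfold CongMod at *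
  rw [← Finset.sum_sub_distrib]
  exact Finset.dvd_sum h

lemma of_dvd (h : (X : ℚ⟦X⟧) ^ M ∣ f) : CongMod M f 0 := by simpa [CongMod] using h

/-- A factor with constant coefficient `1` may be cancelled. -/
lemma cancel {c : ℚ⟦X⟧} (hc : constantCoeff c = 1) (h : CongMod M (c * f) (c * g)) :
    CongMod M f g := by
  have := h.mul_left c⁻¹
  have hc' : c⁻¹ * c = 1 := PowerSeries.inv_mul_cancel _ (by simp [hc])
  simpa only [← mul_assoc, hc', one_mul] using this

end CongMod

lemma congMod_iff {M : ℕ} {f g : ℚ⟦X⟧} :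
    CongMod M f g ↔ ∀ n < M, coeff n f = coeff n g := by
  simp [CongMod, X_pow_dvd_iff, sub_eq_zero]

lemma prod_range_congMod {M n n' : ℕ} (hn : n ≤ n') {F : ℕ → ℚ⟦X⟧}
    (h : ∀ j, n ≤ j → CongMod M (F j) 1) :
    CongMod M (∏ j ∈ range n', F j) (∏ j ∈ range n, F j) := by
  induction n', hn using Nat.le_induction with
  | base => exact .refl _
  | succ m hm ih =>
    rw [prod_range_succ]
    simpa using ih.mul (h m hm)

lemma one_sub_congMod {M m : ℕ} (h : M ≤ m) : CongMod M (1 - (X : ℚ⟦X⟧) ^ m) 1 := by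
  unfold CongMod
  simpa using pow_dvd_pow _ h

lemma one_add_congMod {M m : ℕ} (h : M ≤ m) : CongMod M (1 + (X : ℚ⟦X⟧) ^ m) 1 := by
  unfold CongMod
  simpa using pow_dvd_pow _ h

/-! ### The finite products and the theta-like sums -/

/-- The `q`-shifted factorial `(-q; q²)_n`, with `q = X`. -/
def E (n : ℕ) : ℚ⟦X⟧ := ∏ j ∈ range n, (1 + X ^ (2 * j + 1))

/-- The `q`-shifted factorial `(q²; q²)_n`, with `q = X`. -/
def D (n : ℕ) : ℚ⟦X⟧ := ∏ j ∈ range n, (1 - X ^ (2 * j + 2))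

lemma E_succ (n : ℕ) : E (n + 1) = E n * (1 + X ^ (2 * n + 1)) := prod_range_succ _ _
lemma D_succ (n : ℕ) : D (n + 1) = D n * (1 - X ^ (2 * n + 2)) := prod_range_succ _ _

lemma constantCoeff_E (n : ℕ) : constantCoeff (E n) = 1 := by simp [E]
lemma constantCoeff_D (n : ℕ) : constantCoeff (D n) = 1 := by simp [D]

lemma E_mul_inv (n : ℕ) : E n * (E n)⁻¹ = 1 :=
  PowerSeries.mul_inv_cancel _ (by simp [constantCoeff_E])
lemma D_mul_inv (n : ℕ) : D n * (D n)⁻¹ = 1 :=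
  PowerSeries.mul_inv_cancel _ (by simp [constantCoeff_D])

lemma E_inv (n : ℕ) : (E n)⁻¹ = (1 + X ^ (2 * n + 1)) * (E (n + 1))⁻¹ := by
  have h₁ := E_mul_inv n
  have h₂ := E_mul_inv (n + 1)
  rw [E_succ] at h₂ ⊢
  linear_combination (-(E n)⁻¹) * h₂ +
    ((1 + X ^ (2 * n + 1)) * (E n * (1 + X ^ (2 * n + 1)))⁻¹) * h₁

lemma D_inv (n : ℕ) : (D n)⁻¹ = (1 - X ^ (2 * n + 2)) * (D (n + 1))⁻¹ := by
  have h₁ := D_mul_inv n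
  have h₂ := D_mul_inv (n + 1)
  rw [D_succ] at h₂ ⊢
  linear_combination (-(D n)⁻¹) * h₂ +
    ((1 - X ^ (2 * n + 2)) * (D n * (1 - X ^ (2 * n + 2)))⁻¹) * h₁

/-- The positive part of the `n`-th summand of Andrews' series `J_{k,i}(-1/q; q^{2N}; q²)`, where
`i = a + 1` and `k = a + b + 1`, divided by `(-q; q²)_∞ / (q²; q²)_∞`. -/
def α (a b N n : ℕ) : ℚ⟦X⟧ :=
  (-1) ^ n * X ^ (2 * (a + b + 1) * n * (N + n) + 2 * b * n + n) *
    (D (N + n) * E n * (D n)⁻¹ * (E (N + n))⁻¹)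

/-- The negative part of the `n`-th summand of Andrews' series `J_{k,i}(-1/q; q^{2N}; q²)`, where
`i = a + 1` and `k = a + b + 1`, divided by `(-q; q²)_∞ / (q²; q²)_∞`. -/
def β (a b N n : ℕ) : ℚ⟦X⟧ :=
  (-1) ^ n * X ^ (2 * (a + b + 1) * n * (N + n) + 2 * b * n + n +
      2 * N * (a + 1) + (2 * a + 1) * (2 * n + 1)) *
    (D (N + n) * E (n + 1) * (D n)⁻¹ * (E (N + n + 1))⁻¹)

/-- The sum of the first `M` summands of Andrews' series `J_{k,i}(-1/q; q^{2N}; q²)`, where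
`i = a + 1` and `k = a + b + 1`, divided by `(-q; q²)_∞ / (q²; q²)_∞`. -/
def F (M a b N : ℕ) : ℚ⟦X⟧ := ∑ n ∈ range M, (α a b N n - β a b N n)

lemma α_zero (a b N : ℕ) : α a b N 0 = D N * (E N)⁻¹ := by
  have h := D_mul_inv 0
  simp only [α, E, D, range_zero, prod_empty, one_mul] at *
  simp [h]

/-- The positive summands at `N` turn into negative summands at `N + 1`, with a shift of `n`. -/
lemma α_rec (a b N n : ℕ) :
    α (a + 1) b N (n + 1) - α a (b + 1) N (n + 1) =
      -(X ^ ((2 * N + 2) * (a + 1)) * β b (a + 1) (N + 1) n +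
        X ^ (2 * N + 1 + (2 * N + 2) * a) * β (b + 1) a (N + 1) n) := by
  have h1 : N + (n + 1) = N + n + 1 := by ring
  have h2 : N + 1 + n = N + n + 1 := by ring
  simp only [α, β, h1, h2, E_inv (N + n + 1), D_inv n]
  generalize D (N + n + 1) = d, E (n + 1) = e, (D (n + 1))⁻¹ = d', (E (N + n + 1 + 1))⁻¹ = e'
  ring

/-- The negative summands at `N` turn into positive summands at `N + 1`. -/
lemma β_rec (a b N n : ℕ) :
    β a (b + 1) N n - β (a + 1) b N n =
      X ^ ((2 * N + 2) * (a + 1)) * α b (a + 1) (N + 1) n +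
        X ^ (2 * N + 1 + (2 * N + 2) * a) * α (b + 1) a (N + 1) n := by
  have h2 : N + 1 + n = N + n + 1 := by ring
  simp only [α, β, h2, D_succ (N + n), E_succ n]
  generalize D (N + n) = d, E n = e, (D n)⁻¹ = d', (E (N + n + 1))⁻¹ = e'
  ring

lemma base_rec (b N n : ℕ) :
    α 0 b N (n + 1) - β 0 b N (n + 1) = α b 0 (N + 1) (n + 1) - β b 0 (N + 1) n := by
  have h1 : N + (n + 1) = N + n + 1 := by ring
  have h2 : N + 1 + n = N + n + 1 := by ring
  have h3 : N + 1 + (n + 1) = N + n + 1 + 1 := by ring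
  simp only [α, β, h1, h2, h3, E_inv (N + n + 1), D_inv n, D_succ (N + n + 1), E_succ (n + 1)]
  generalize D (N + n + 1) = d, E (n + 1) = e, (D (n + 1))⁻¹ = d', (E (N + n + 1 + 1))⁻¹ = e'
  ring

lemma base_rec_zero (b N : ℕ) : α 0 b N 0 - β 0 b N 0 = α b 0 (N + 1) 0 := by
  have h : (D 0)⁻¹ = 1 := by simp [D]
  rw [α_zero, α_zero]
  simp only [β, h, Nat.add_zero, E_inv N, D_succ N, E_succ 0]
  simp only [E, range_zero, prod_empty]
  ring

lemma X_pow_dvd_β {M a b N n : ℕ} (h : M ≤ n + 2 * N) : (X : ℚ⟦X⟧) ^ M ∣ β a b N n := by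
  unfold β
  refine Dvd.dvd.mul_right (Dvd.dvd.mul_left (pow_dvd_pow _ ?_) _) _
  nlinarith [Nat.zero_le (2 * (a + b + 1) * n * (N + n)), Nat.zero_le (b * n), Nat.zero_le (N * a),
    Nat.zero_le (a * n)]

/-- The recurrence of Andrews' series.  Cutting off the series leaves a boundary term of order
at least `M`. -/
lemma F_rec (M a b N : ℕ) :
    CongMod M (F M (a + 1) b N)
      (F M a (b + 1) N + (X ^ ((2 * N + 2) * (a + 1)) * F M b (a + 1) (N + 1) +
        X ^ (2 * N + 1 + (2 * N + 2) * a) * F M (b + 1) a (N + 1))) := by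
  rcases M with _ | M
  · exact .of_eq (by simp [F])
  have hα : ∑ n ∈ range (M + 1), α (a + 1) b N n - ∑ n ∈ range (M + 1), α a (b + 1) N n =
      -∑ n ∈ range M, (X ^ ((2 * N + 2) * (a + 1)) * β b (a + 1) (N + 1) n +
        X ^ (2 * N + 1 + (2 * N + 2) * a) * β (b + 1) a (N + 1) n) := by
    rw [← sum_sub_distrib, sum_range_succ', α_zero, α_zero, sub_self, add_zero,
      ← sum_neg_distrib]
    exact sum_congr rfl fun n _ => α_rec a b N n
  have hβ : ∑ n ∈ range (M + 1), β a (b + 1) N n - ∑ n ∈ range (M + 1), β (a + 1) b N n =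
      ∑ n ∈ range (M + 1), (X ^ ((2 * N + 2) * (a + 1)) * α b (a + 1) (N + 1) n +
        X ^ (2 * N + 1 + (2 * N + 2) * a) * α (b + 1) a (N + 1) n) := by
    rw [← sum_sub_distrib]
    exact sum_congr rfl fun n _ => β_rec a b N n
  have hM := sum_range_succ (fun n => X ^ ((2 * N + 2) * (a + 1)) * β b (a + 1) (N + 1) n +
        X ^ (2 * N + 1 + (2 * N + 2) * a) * β (b + 1) a (N + 1) n) M
  have hd : (X : ℚ⟦X⟧) ^ (M + 1) ∣ X ^ ((2 * N + 2) * (a + 1)) * β b (a + 1) (N + 1) M +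
        X ^ (2 * N + 1 + (2 * N + 2) * a) * β (b + 1) a (N + 1) M :=
    dvd_add (Dvd.dvd.mul_left (X_pow_dvd_β (by omega)) _)
      (Dvd.dvd.mul_left (X_pow_dvd_β (by omega)) _)
  unfold CongMod
  convert hd using 1
  simp only [F, sum_sub_distrib, sum_add_distrib, ← mul_sum] at hα hβ hM ⊢
  linear_combination hα + hβ + hM

lemma F_zero (M b N : ℕ) : CongMod M (F M 0 b N) (F M b 0 (N + 1)) := by
  rcases M with _ | M
  · exact .of_eq (by simp [F])
  have h₁ : F (M + 1) 0 b N = ∑ n ∈ range (M + 1), α b 0 (N + 1) n -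
      ∑ n ∈ range M, β b 0 (N + 1) n := by
    rw [F, sum_range_succ', base_rec_zero, sum_congr rfl fun n _ => base_rec b N n,
      sum_sub_distrib, sum_range_succ' (fun n => α b 0 (N + 1) n)]
    ring
  have hd : (X : ℚ⟦X⟧) ^ (M + 1) ∣ β b 0 (N + 1) M := X_pow_dvd_β (by omega)
  unfold CongMod
  convert hd using 1
  rw [h₁, F, sum_sub_distrib, sum_range_succ (fun n => β b 0 (N + 1) n)]
  ring

/-- The series tends to `1` as `N` grows. -/
lemma F_top {M : ℕ} (hM : 0 < M) (a b : ℕ) : CongMod M (E M * (D M)⁻¹ * F M a b M) 1 := by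
  obtain ⟨m, rfl⟩ := Nat.exists_eq_succ_of_ne_zero hM.ne'
  have h₁ : CongMod (m + 1) (F (m + 1) a b (m + 1)) (D (m + 1) * (E (m + 1))⁻¹) := by
    rw [F, sum_sub_distrib, sum_range_succ', α_zero]
    unfold CongMod
    rw [add_sub_right_comm, add_sub_cancel_right]
    refine dvd_sub (dvd_sum fun n _ => ?_) (dvd_sum fun n _ => X_pow_dvd_β (by omega))
    unfold α
    refine Dvd.dvd.mul_right (Dvd.dvd.mul_left (pow_dvd_pow _ ?_) _) _
    nlinarith [Nat.zero_le ((a + b) * (n + 1) * (m + 1 + (n + 1))),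
      Nat.zero_le (n * (m + 1 + (n + 1)))]
  refine (h₁.mul_left _).trans (.of_eq ?_)
  linear_combination E_mul_inv (m + 1) * (D (m + 1) * (D (m + 1))⁻¹) + D_mul_inv (m + 1)

/-! ### A finite form of the Jacobi triple product -/

/-- The Gaussian binomial coefficient `[n, r]_Q`, by its Pascal recursion. -/
def gauss (Q : ℚ⟦X⟧) : ℕ → ℕ → ℚ⟦X⟧
  | _, 0 => 1
  | 0, _ + 1 => 0
  | n + 1, r + 1 => gauss Q n r + Q ^ (r + 1) * gauss Q n (r + 1)

/-- The `q`-shifted factorial `(Q; Q)_n`. -/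
def poch (Q : ℚ⟦X⟧) (n : ℕ) : ℚ⟦X⟧ := ∏ j ∈ range n, (1 - Q ^ (j + 1))

lemma poch_succ (Q : ℚ⟦X⟧) (n : ℕ) : poch Q (n + 1) = poch Q n * (1 - Q ^ (n + 1)) :=
  prod_range_succ _ _

lemma gauss_zero_right (Q : ℚ⟦X⟧) (n : ℕ) : gauss Q n 0 = 1 := by cases n <;> rfl

lemma gauss_eq_zero (Q : ℚ⟦X⟧) {n r : ℕ} (h : n < r) : gauss Q n r = 0 := by
  induction n generalizing r with
  | zero => obtain ⟨r, rfl⟩ := Nat.exists_eq_succ_of_ne_zero h.ne'; rfl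
  | succ n ih =>
    obtain ⟨r, rfl⟩ := Nat.exists_eq_succ_of_ne_zero (Nat.ne_zero_of_lt h)
    rw [gauss, ih (by omega), ih (by omega)]
    simp

lemma gauss_mul_poch (Q : ℚ⟦X⟧) (r s : ℕ) :
    gauss Q (r + s) r * (poch Q r * poch Q s) = poch Q (r + s) := by
  induction hn : r + s generalizing r s with
  | zero =>
    obtain ⟨rfl, rfl⟩ : r = 0 ∧ s = 0 := by omega
    simp [gauss, poch]
  | succ n ih =>
    rcases r with _ | r
    · obtain rfl : s = n + 1 := by omega
      simp [gauss, poch]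
    rcases s with _ | s
    · obtain rfl : r = n := by omega
      have h := ih r 0 rfl
      rw [gauss, gauss_eq_zero Q (Nat.lt_succ_self r), poch_succ]
      linear_combination (1 - Q ^ (r + 1)) * h
    · have h₁ := ih r (s + 1) (by omega)
      have h₂ := ih (r + 1) s (by omega)
      obtain rfl : n = r + s + 1 := by omega
      rw [gauss, poch_succ Q r, poch_succ Q s, poch_succ Q (r + s + 1)]
      rw [poch_succ Q s] at h₁
      rw [poch_succ Q r] at h₂
      linear_combination (1 - Q ^ (r + 1)) * h₁ + Q ^ (r + 1) * (1 - Q ^ (s + 1)) * h₂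

/-- The `q`-binomial theorem, in homogeneous form. -/
lemma q_binomial (Q x y : ℚ⟦X⟧) (n : ℕ) :
    ∏ m ∈ range n, (x + y * Q ^ m) =
      ∑ r ∈ range (n + 1), Q ^ r.choose 2 * gauss Q n r * x ^ (n - r) * y ^ r := by
  induction n generalizing y with
  | zero => simp [gauss]
  | succ n ih =>
    have h : ∀ m, x + y * Q ^ (m + 1) = x + (y * Q) * Q ^ m := fun m => by ring
    rw [prod_range_succ', prod_congr rfl fun m _ => h m, ih (y * Q), pow_zero, mul_one, mul_add,
      sum_mul, sum_mul]
    -- the summand with `r = n + 1` in the part multiplied by `x` vanishes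
    have hx : ∑ r ∈ range (n + 1),
        Q ^ r.choose 2 * gauss Q n r * x ^ (n - r) * (y * Q) ^ r * x =
        ∑ r ∈ range (n + 1), Q ^ (r + 1).choose 2 * (Q ^ (r + 1) * gauss Q n (r + 1)) *
          x ^ (n - r) * y ^ (r + 1) + x ^ (n + 1) := by
      have h₀ : x ^ (n + 1) = Q ^ (0 : ℕ).choose 2 * (Q ^ 0 * gauss Q n 0) *
          x ^ (n + 1 - 0) * y ^ 0 := by simp [gauss_zero_right]
      have := sum_range_succ' (fun r => Q ^ r.choose 2 * (Q ^ r * gauss Q n r) *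
          x ^ (n + 1 - r) * y ^ r) (n + 1)
      simp only [Nat.add_sub_add_right] at this
      rw [h₀, ← this, sum_range_succ _ (n + 1), gauss_eq_zero Q (Nat.lt_succ_self n)]
      simp only [mul_zero, zero_mul, add_zero]
      refine sum_congr rfl fun r hr => ?_
      rw [Nat.sub_add_comm (by simpa [Nat.lt_succ_iff] using hr)]
      ring
    rw [hx, sum_range_succ' _ (n + 1), add_right_comm, ← sum_add_distrib]
    simp only [Nat.add_sub_add_right]
    congr 1
    · refine sum_congr rfl fun r _ => ?_
      rw [gauss, Nat.choose_succ_succ' r 1, Nat.choose_one_right]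
      ring
    · simp [gauss_zero_right]

/-- `∏ (1 - u Q ^ m) (1 - w Q ^ m)` with `u w = Q`, up to a monomial factor. -/
lemma prod_two (Q u w : ℚ⟦X⟧) (huw : u * w = Q) (M : ℕ) :
    ∏ m ∈ range (2 * M), (Q ^ M + (-u) * Q ^ m) =
      (Q ^ (M * M) * Q ^ M.choose 2 * (-u) ^ M) *
        ∏ m ∈ range M, ((1 - u * Q ^ m) * (1 - w * Q ^ m)) := by
  have h₁ : ∏ m ∈ range M, (Q ^ M + (-u) * Q ^ (M + m)) =
      Q ^ (M * M) * ∏ m ∈ range M, (1 - u * Q ^ m) := by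
    have : ∀ m ∈ range M, Q ^ M + (-u) * Q ^ (M + m) = Q ^ M * (1 - u * Q ^ m) :=
      fun m _ => by ring
    rw [prod_congr rfl this, prod_mul_distrib]
    simp [← pow_mul]
  have h₂ : ∏ m ∈ range M, (Q ^ M + (-u) * Q ^ m) =
      Q ^ M.choose 2 * (-u) ^ M * ∏ m ∈ range M, (1 - w * Q ^ m) := by
    have : ∀ m ∈ range M, Q ^ M + (-u) * Q ^ m = (Q ^ m * (-u)) * (1 - w * Q ^ (M - 1 - m)) := by
      intro m hm
      obtain ⟨s, rfl⟩ : ∃ s, M = m + s + 1 :=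
        ⟨M - m - 1, by have := Finset.mem_range.1 hm; omega⟩
      rw [show m + s + 1 - 1 - m = s by omega, pow_succ, pow_add, ← huw]
      ring
    rw [prod_congr rfl this, prod_mul_distrib, prod_mul_distrib,
      prod_range_reflect (fun m => 1 - w * Q ^ m) M, prod_pow_eq_pow_sum, sum_range_id,
      ← Nat.choose_two_right]
    simp
  rw [two_mul, prod_range_add, h₁, h₂, prod_mul_distrib]
  ring

/-- The finite Jacobi triple product, for a nonzero `Q = u w`. -/
lemma finite_jtp (Q u w : ℚ⟦X⟧) (huw : u * w = Q) (hQ : Q ≠ 0) (M : ℕ) :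
    ∏ m ∈ range M, ((1 - u * Q ^ m) * (1 - w * Q ^ m)) =
      ∑ j ∈ range M, (-1) ^ (j + 1) * u ^ (j + 1) * Q ^ (j + 1).choose 2 *
          gauss Q (2 * M) (M + (j + 1)) +
        ∑ j ∈ range (M + 1), (-1) ^ j * w ^ j * Q ^ j.choose 2 * gauss Q (2 * M) (M - j) := by
  have hu : u ≠ 0 := by rintro rfl; exact hQ (by simpa using huw.symm)
  have hne : Q ^ (M * M) * Q ^ M.choose 2 * (-u) ^ M ≠ 0 := by
    simp [hQ, hu]
  have hch : ∀ s t : ℕ, (s + t).choose 2 = s.choose 2 + t.choose 2 + s * t := by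
    intro s t
    induction t with
    | zero => simp
    | succ t ih =>
      rw [← add_assoc, Nat.choose_succ_succ' (s + t) 1, ih, Nat.choose_succ_succ' t 1]
      simp only [Nat.choose_one_right]
      ring
  refine mul_left_cancel₀ hne ?_
  rw [← prod_two Q u w huw, q_binomial, show 2 * M + 1 = (M + 1) + M by ring, sum_range_add,
    add_comm, mul_add]
  congr 1
  · rw [mul_sum]
    refine sum_congr rfl fun j hj => ?_
    have hj := Finset.mem_range.1 hj
    obtain ⟨s, rfl⟩ : ∃ s, M = j + 1 + s := ⟨M - (j + 1), by omega⟩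
    rw [show j + 1 + s + 1 + j = j + 1 + s + (j + 1) by ring,
      show 2 * (j + 1 + s) - (j + 1 + s + (j + 1)) = s by omega, hch (j + 1 + s) (j + 1)]
    generalize gauss Q _ _ = g
    generalize (j + 1 + s).choose 2 = c, (j + 1).choose 2 = c'
    ring
  · rw [mul_sum, ← sum_range_reflect]
    refine sum_congr rfl fun j hj => ?_
    have hj := Finset.mem_range.1 hj
    obtain ⟨s, rfl⟩ : ∃ s, M = j + s := ⟨M - j, by omega⟩
    rw [show j + s + 1 - 1 - j = s by omega, show j + s - j = s by omega,
      show 2 * (j + s) - s = 2 * j + s by omega, hch j s]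
    generalize gauss Q _ _ = g
    have hcj : j * j = 2 * j.choose 2 + j := by
      have h2 := Nat.choose_two_right j
      have h3 := Nat.div_mul_cancel (Nat.even_mul_pred_self j).two_dvd
      rw [← h2] at h3
      rcases j with _ | j
      · simp
      · simp only [Nat.add_sub_cancel] at h3
        nlinarith
    have hQj : Q ^ j = u ^ j * w ^ j := by rw [← huw, mul_pow]
    have e : ∀ c c' : ℕ, j * j = 2 * c + j →
        Q ^ c' * g * (Q ^ (j + s)) ^ (2 * j + s) * (-u) ^ s =
        Q ^ ((j + s) * (j + s)) * Q ^ (c + c' + j * s) * (-u) ^ (j + s) *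
          ((-1) ^ j * w ^ j * Q ^ c * g) := by
      intro c c' hc
      have e₁ : (Q ^ (j + s)) ^ (2 * j + s) =
          Q ^ ((j + s) * (j + s)) * Q ^ (c + c + j * s) * Q ^ j := by
        rw [← pow_mul, ← pow_add, ← pow_add]
        congr 1
        linarith
      have e₂ : ((-1 : ℚ⟦X⟧) ^ j) * (-1) ^ j = 1 := by rw [← mul_pow]; simp
      rw [e₁, hQj, neg_pow u, neg_pow u (j + s), pow_add (-1) j s]
      linear_combination (-(Q ^ c' * g * Q ^ ((j + s) * (j + s)) * Q ^ (c + c + j * s) * w ^ j *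
        u ^ (j + s) * (-1) ^ s)) * e₂
    exact e _ _ hcj

lemma poch_congMod {k : ℕ} (hk : 0 < k) {M n n' : ℕ} (hn : M ≤ n + 1) (hn' : M ≤ n' + 1) :
    CongMod M (poch (X ^ k) n) (poch (X ^ k) n') := by
  wlog h : n' ≤ n generalizing n n'
  · exact (this hn' hn (by omega)).symm
  refine prod_range_congMod h fun j hj => ?_
  rw [← pow_mul]
  exact one_sub_congMod (by nlinarith)

/-- Up to high order, a Gaussian binomial coefficient is `1 / (Q; Q)_∞`. -/
lemma gauss_congMod {k : ℕ} (hk : 0 < k) {M m r s : ℕ} (hr : M ≤ r + 1) (hs : M ≤ s + 1)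
    (hm : M ≤ m + 1) : CongMod M (poch (X ^ k) m * gauss (X ^ k) (r + s) r) 1 := by
  have hc : constantCoeff (poch (X ^ k : ℚ⟦X⟧) r) = 1 := by
    simp [poch, hk.ne']
  refine CongMod.cancel hc ?_
  have h := CongMod.of_eq (M := M) (gauss_mul_poch (X ^ k) r s)
  refine CongMod.trans ?_ (h.trans ?_)
  · rw [mul_left_comm, mul_comm (gauss _ _ _), mul_left_comm, ← mul_assoc]
    exact ((CongMod.refl _).mul (poch_congMod hk hm hs)).mul_right _
  · rw [mul_one]
    exact poch_congMod hk (by omega) hr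

/-- The product side of the Jacobi triple product, cut off. -/
def Θ (a b M : ℕ) : ℚ⟦X⟧ :=
  poch (X ^ (4 * (a + b + 1))) M *
    ∏ m ∈ range M, ((1 - X ^ (2 * a + 1) * (X ^ (4 * (a + b + 1))) ^ m) *
      (1 - X ^ (2 * a + 4 * b + 3) * (X ^ (4 * (a + b + 1))) ^ m))

/-- The Jacobi triple product evaluates the series at `N = 0`. -/
lemma F_congMod_Θ (a b M : ℕ) : CongMod M (F M a b 0) (Θ a b M) := by
  obtain ⟨k, hk⟩ : ∃ k, k = a + b + 1 := ⟨_, rfl⟩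
  have hk0 : 0 < 4 * k := by omega
  have huw : (X : ℚ⟦X⟧) ^ (2 * a + 1) * X ^ (2 * a + 4 * b + 3) = X ^ (4 * k) := by
    rw [← pow_add, hk]; congr 1; ring
  -- a Gaussian coefficient at distance `j` from the centre is controlled modulo `X ^ (M - j + 1)`,
  -- and the exponent `j choose 2` of `Q` makes up for the difference
  have key : ∀ (j p : ℕ) (c g : ℚ⟦X⟧), 0 < p →
      CongMod (M - j + 1) (poch (X ^ (4 * k)) M * g) 1 →
      CongMod M (poch (X ^ (4 * k)) M * (c * (X ^ p) ^ j * (X ^ (4 * k)) ^ j.choose 2 * g))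
        (c * (X ^ p) ^ j * (X ^ (4 * k)) ^ j.choose 2) := by
    intro j p c g hp h
    have h' := mul_dvd_mul (dvd_refl ((X : ℚ⟦X⟧) ^ (p * j + 4 * k * j.choose 2))) h
    rw [← pow_add] at h'
    have h'' := (pow_dvd_pow (X : ℚ⟦X⟧) (show M ≤ p * j + 4 * k * j.choose 2 + (M - j + 1) by
      have : j ≤ p * j := Nat.le_mul_of_pos_left _ hp
      omega)).trans h'
    unfold CongMod
    have := h''.mul_left c
    convert this using 1
    rw [pow_add, pow_mul, pow_mul]
    ring
  rw [Θ, ← hk, finite_jtp _ _ _ huw (pow_ne_zero _ X_ne_zero), mul_add, mul_sum, mul_sum]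
  refine CongMod.symm (CongMod.trans (CongMod.add (CongMod.sum (G := fun j => (-1) ^ (j + 1) *
    (X ^ (2 * a + 1)) ^ (j + 1) * (X ^ (4 * k)) ^ (j + 1).choose 2) fun j hj => ?_)
    (CongMod.sum (G := fun j => (-1) ^ j *
    (X ^ (2 * a + 4 * b + 3)) ^ j * (X ^ (4 * k)) ^ j.choose 2) fun j hj => ?_)) ?_)
  · have hj := Finset.mem_range.1 hj
    refine key (j + 1) _ _ _ (by omega) ?_
    have := gauss_congMod hk0 (M := M - (j + 1) + 1) (m := M) (r := M + (j + 1))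
      (s := M - (j + 1)) (by omega) (by omega) (by omega)
    rwa [show M + (j + 1) + (M - (j + 1)) = 2 * M by omega] at this
  · have hj := Finset.mem_range.1 hj
    refine key j _ _ _ (by omega) ?_
    have := gauss_congMod hk0 (M := M - j + 1) (m := M) (r := M - j)
      (s := M + j) (by omega) (by omega) (by omega)
    rwa [show M - j + (M + j) = 2 * M by omega] at this
  · have hd : (X : ℚ⟦X⟧) ^ M ∣ (-1) ^ M *
        (X ^ (2 * a + 4 * b + 3)) ^ M * (X ^ (4 * k)) ^ M.choose 2 := by
      rw [← pow_mul]
      exact Dvd.dvd.mul_right (Dvd.dvd.mul_left (pow_dvd_pow _ (by nlinarith)) _) _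
    rw [sum_range_succ]
    refine CongMod.trans (((CongMod.refl _).add ((CongMod.refl _).add (.of_dvd hd)))) ?_
    rw [add_zero, ← sum_add_distrib, F]
    refine .of_eq (sum_congr rfl fun j _ => ?_)
    have hc2 : 2 * (j + 1).choose 2 = j * (j + 1) := by
      have h2 := Nat.choose_two_right (j + 1)
      have h3 := Nat.div_mul_cancel (Nat.even_mul_pred_self (j + 1)).two_dvd
      rw [← h2] at h3
      simp only [Nat.add_sub_cancel] at h3
      linarith
    have hc1 : (j + 1).choose 2 = j.choose 2 + j := by
      rw [Nat.choose_succ_succ' j 1, Nat.choose_one_right, add_comm]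
    have hα : α a b 0 j = (-1) ^ j * X ^ (2 * (a + b + 1) * j * j + 2 * b * j + j) := by
      rw [α, zero_add]
      linear_combination ((-1) ^ j * X ^ (2 * (a + b + 1) * j * j + 2 * b * j + j)) *
        (E j * (E j)⁻¹ * D_mul_inv j + E_mul_inv j)
    have hβ : β a b 0 j = (-1) ^ j * X ^ (2 * (a + b + 1) * j * j + 2 * b * j + j +
        (2 * a + 1) * (2 * j + 1)) := by
      rw [β, zero_add, mul_zero, zero_mul, add_zero]
      linear_combination ((-1) ^ j * X ^ (2 * (a + b + 1) * j * j + 2 * b * j + j +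
        (2 * a + 1) * (2 * j + 1))) *
        (E (j + 1) * (E (j + 1))⁻¹ * D_mul_inv j + E_mul_inv (j + 1))
    have e₁ : 2 * (a + b + 1) * j * j + 2 * b * j + j =
        (2 * a + 4 * b + 3) * j + 4 * k * j.choose 2 := by
      subst hk
      rw [hc1] at hc2
      zify at hc2 ⊢
      linear_combination (-2 * (a + b + 1)) * hc2
    have e₂ : 2 * (a + b + 1) * j * j + 2 * b * j + j + (2 * a + 1) * (2 * j + 1) =
        (2 * a + 1) * (j + 1) + 4 * k * (j + 1).choose 2 := by
      subst hk
      zify at hc2 ⊢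
      linear_combination (-2 * (a + b + 1)) * hc2
    rw [hα, hβ, e₂, e₁, ← pow_mul, ← pow_mul, ← pow_mul, ← pow_mul, pow_add, pow_add]
    ring

/-! ### The product identity -/

/-- The product of `1 - X ^ t` over the parts `1 ≤ t ≤ L` with `p t`. -/
def partProd (p : ℕ → Prop) (L : ℕ) : ℚ⟦X⟧ :=
  ∏ s ∈ range L, if p (s + 1) then 1 - X ^ (s + 1) else 1

/-- The parts allowed in the congruence condition, for `i = a + 1` and `k = a + b + 1`. -/
def Allowed (a b t : ℕ) : Prop :=
  t % 4 ≠ 2 ∧ t % (4 * (a + b + 1)) ≠ 0 ∧ t % (4 * (a + b + 1)) ≠ 2 * a + 1 ∧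
    t % (4 * (a + b + 1)) ≠ 2 * a + 4 * b + 3

/-- In each block of `4 k` consecutive integers, the factors of the triple product supply exactly
the excluded residues `0` and `± (2 i - 1)`. -/
lemma partProd_mul_Θ (a b M : ℕ) :
    partProd (Allowed a b) (4 * (a + b + 1) * M) * Θ a b M =
      partProd (fun t => t % 4 ≠ 2) (4 * (a + b + 1) * M) := by
  induction M with
  | zero => simp [partProd, Θ, poch]
  | succ M ih =>
    set K := 4 * (a + b + 1) with hK
    have hblock : (∏ s ∈ range K, if Allowed a b (K * M + s + 1) then
          1 - (X : ℚ⟦X⟧) ^ (K * M + s + 1) else 1) *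
        ((1 - (X ^ K) ^ (M + 1)) * ((1 - X ^ (2 * a + 1) * (X ^ K) ^ M) *
          (1 - X ^ (2 * a + 4 * b + 3) * (X ^ K) ^ M))) =
        ∏ s ∈ range K, if (K * M + s + 1) % 4 ≠ 2 then
          1 - (X : ℚ⟦X⟧) ^ (K * M + s + 1) else 1 := by
      have hsingle : ∀ c < K, ∏ s ∈ range K, (if s = c then 1 - (X : ℚ⟦X⟧) ^ (K * M + s + 1)
          else 1) = 1 - X ^ (K * M + c + 1) := by
        intro c hc
        rw [prod_ite_eq' (range K) c, if_pos (Finset.mem_range.2 hc)]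
      have e₁ : (1 - (X ^ K) ^ (M + 1) : ℚ⟦X⟧) = 1 - X ^ (K * M + (K - 1) + 1) := by
        rw [← pow_mul, show K * M + (K - 1) + 1 = K * (M + 1) by rw [mul_add]; omega]
      have e₂ : (1 - X ^ (2 * a + 1) * (X ^ K) ^ M : ℚ⟦X⟧) = 1 - X ^ (K * M + 2 * a + 1) := by
        rw [← pow_mul, ← pow_add]; congr 2; ring
      have e₃ : (1 - X ^ (2 * a + 4 * b + 3) * (X ^ K) ^ M : ℚ⟦X⟧) =
          1 - X ^ (K * M + (2 * a + 4 * b + 2) + 1) := by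
        rw [← pow_mul, ← pow_add]; congr 2; ring
      rw [e₁, e₂, e₃, ← hsingle (K - 1) (by omega), ← hsingle (2 * a) (by omega),
        ← hsingle (2 * a + 4 * b + 2) (by omega), ← prod_mul_distrib, ← prod_mul_distrib,
        ← prod_mul_distrib]
      refine prod_congr rfl fun s hs => ?_
      have hs := Finset.mem_range.1 hs
      have h4 : (K * M + s + 1) % 4 = (s + 1) % 4 := by
        rw [hK, show 4 * (a + b + 1) * M + s + 1 = s + 1 + 4 * ((a + b + 1) * M) by ring,
          Nat.add_mul_mod_self_left]
      have hKm : (K * M + s + 1) % K = (s + 1) % K := by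
        rw [show K * M + s + 1 = s + 1 + K * M by ring, Nat.add_mul_mod_self_left]
      unfold Allowed
      rw [← hK, h4, hKm]
      rcases (show s + 1 = K ∨ s + 1 < K by omega) with h | h
      · rw [h, Nat.mod_self]
        have h₁ : K % 4 = 0 := by omega
        have h₂ : s = K - 1 := by omega
        have h₃ : s ≠ 2 * a := by omega
        have h₄ : s ≠ 2 * a + 4 * b + 2 := by omega
        simp [h₁, ← h₂, h₃, h₄]
      · rw [Nat.mod_eq_of_lt h]
        have h₂ : s ≠ K - 1 := by omega
        by_cases h₃ : s = 2 * a
        · have h₄ : s ≠ 2 * a + 4 * b + 2 := by omega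
          have h₅ : (s + 1) % 4 ≠ 2 := by omega
          have h₆ : s + 1 = 2 * a + 1 := by omega
          rw [if_neg (by tauto), if_neg h₂, if_pos h₃, if_neg h₄, if_pos h₅]
          ring
        by_cases h₄ : s = 2 * a + 4 * b + 2
        · have h₅ : (s + 1) % 4 ≠ 2 := by omega
          have h₆ : s + 1 = 2 * a + 4 * b + 3 := by omega
          rw [if_neg (by tauto), if_neg h₂, if_neg h₃, if_pos h₄, if_pos h₅]
          ring
        have : ((s + 1) % 4 ≠ 2 ∧ s + 1 ≠ 0 ∧ s + 1 ≠ 2 * a + 1 ∧ s + 1 ≠ 2 * a + 4 * b + 3) ↔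
          (s + 1) % 4 ≠ 2 := by omega
        simp only [this, if_neg h₂, if_neg h₃, if_neg h₄, mul_one]
    have hsplit : ∀ p : ℕ → Prop, partProd p (K * (M + 1)) = partProd p (K * M) *
        ∏ s ∈ range K, if p (K * M + s + 1) then 1 - (X : ℚ⟦X⟧) ^ (K * M + s + 1) else 1 := by
      intro p
      rw [partProd, mul_add, mul_one, prod_range_add]
      rfl
    have hΘ : Θ a b (M + 1) = Θ a b M * ((1 - (X ^ K) ^ (M + 1)) *
        ((1 - X ^ (2 * a + 1) * (X ^ K) ^ M) * (1 - X ^ (2 * a + 4 * b + 3) * (X ^ K) ^ M))) := by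
      simp only [Θ, poch_succ, prod_range_succ, ← hK]
      ring
    rw [hsplit, hsplit, hΘ, mul_mul_mul_comm, ih]
    congr 1
    convert hblock

/-- The identity `∏_{t ≢ 2 (4)} (1 - q ^ t) · (-q; q²)_∞ = (q²; q²)_∞`. -/
lemma partProd_mul_E {M K : ℕ} (hM : M ≤ 2 * K) :
    CongMod M (partProd (fun t => t % 4 ≠ 2) (4 * K) * E M) (D M) := by
  have hE : CongMod M (E (2 * K)) (E M) :=
    prod_range_congMod hM fun j hj => one_add_congMod (by omega)
  have hD : CongMod M (D (2 * K)) (D M) :=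
    prod_range_congMod hM fun j hj => one_sub_congMod (by omega)
  have h₁ : partProd (fun t => t % 4 ≠ 2) (4 * K) * E (2 * K) =
      (∏ j ∈ range (2 * K), (1 - X ^ (4 * j + 2))) * ∏ j ∈ range K, (1 - X ^ (4 * j + 4)) := by
    clear hE hD hM
    induction K with
    | zero => simp [partProd, E]
    | succ K ih =>
      have h₁ : (4 * K + 1) % 4 ≠ 2 := by omega
      have h₂ : ¬ (4 * K + 1 + 1) % 4 ≠ 2 := by omega
      have h₃ : (4 * K + 2 + 1) % 4 ≠ 2 := by omega
      have h₄ : (4 * K + 3 + 1) % 4 ≠ 2 := by omega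
      have hp : partProd (fun t => t % 4 ≠ 2) (4 * (K + 1)) =
          partProd (fun t => t % 4 ≠ 2) (4 * K) * ((1 - X ^ (4 * K + 1)) *
            (1 - X ^ (4 * K + 3)) * (1 - X ^ (4 * K + 4))) := by
        rw [partProd, mul_add, mul_one, prod_range_succ, prod_range_succ, prod_range_succ,
          prod_range_succ, if_pos h₁, if_neg h₂, if_pos h₃, if_pos h₄, partProd]
        ring
      rw [hp, mul_add 2, mul_one, E_succ, E_succ, prod_range_succ, prod_range_succ,
        prod_range_succ]
      linear_combination ((1 - X ^ (4 * K + 1)) * (1 - X ^ (4 * K + 3)) * (1 - X ^ (4 * K + 4)) *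
        (1 + X ^ (2 * (2 * K) + 1)) * (1 + X ^ (2 * (2 * K + 1) + 1))) * ih
  have h₂ : (∏ j ∈ range K, (1 - X ^ (4 * j + 2))) * ∏ j ∈ range K, (1 - X ^ (4 * j + 4)) =
      D (2 * K) := by
    clear h₁ hE hD hM
    induction K with
    | zero => simp [D]
    | succ K ih =>
      rw [mul_add 2, mul_one, D_succ, D_succ, prod_range_succ, prod_range_succ, ← ih]
      ring
  have h₃ : CongMod M (∏ j ∈ range (2 * K), (1 - X ^ (4 * j + 2)))
      (∏ j ∈ range K, (1 - X ^ (4 * j + 2))) :=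
    prod_range_congMod (by omega) fun j hj => one_sub_congMod (by omega)
  refine (hE.symm.mul_left _).trans ?_
  rw [h₁]
  refine (h₃.mul_right _).trans ?_
  rw [h₂]
  exact hD

/-- Andrews' series at `N = 0` is the reciprocal of the product over allowed parts. -/
lemma series_mul_partProd (a b M : ℕ) :
    CongMod M (E M * (D M)⁻¹ * F M a b 0 * partProd (Allowed a b) (4 * (a + b + 1) * M)) 1 := by
  have h₁ := (F_congMod_Θ a b M).mul_left
    (E M * (D M)⁻¹ * partProd (Allowed a b) (4 * (a + b + 1) * M))
  have h₂ : CongMod M (partProd (fun t => t % 4 ≠ 2) (4 * (a + b + 1) * M) * E M) (D M) := by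
    rw [mul_assoc 4]
    exact partProd_mul_E (by nlinarith [Nat.zero_le ((a + b) * M)])
  rw [← partProd_mul_Θ] at h₂
  have h₃ := h₂.mul_left (D M)⁻¹
  rw [mul_comm _ (D M), D_mul_inv] at h₃
  refine ((CongMod.of_eq ?_).trans h₁).trans ((CongMod.of_eq ?_).trans h₃) <;> ring

/-! ### Generating functions of sets of partitions -/

lemma finite_partitions (n : ℕ) : {f : ℕ →₀ ℕ | IsPartitionOf n f}.Finite := by
  refine ((range (n + 1)).finsupp fun _ => range (n + 1)).finite_toSet.subset ?_
  rintro f ⟨h0, hn⟩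
  have key : ∀ t ∈ f.support, t * f t ≤ n := fun t ht => by
    rw [← hn]
    exact Finset.single_le_sum (f := fun t => t * f t) (fun _ _ => Nat.zero_le _) ht
  have hpos : ∀ t ∈ f.support, 0 < t := fun t ht => by
    rcases Nat.eq_zero_or_pos t with rfl | h
    · exact absurd h0 (Finsupp.mem_support_iff.1 ht)
    · exact h
  rw [Finset.mem_coe, Finset.mem_finsupp_iff]
  refine ⟨fun t ht => ?_, fun t ht => ?_⟩
  · have h₁ := key t ht
    have h₂ := Nat.pos_of_ne_zero (Finsupp.mem_support_iff.1 ht)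
    exact Finset.mem_range.2 (by nlinarith)
  · by_cases hts : t ∈ f.support
    · have h₁ := key t hts
      have h₂ := hpos t hts
      exact Finset.mem_range.2 (by nlinarith)
    · rw [Finsupp.notMem_support_iff.1 hts]; simp

/-- The generating function of the partitions whose multiplicity function lies in `S`. -/
def gf (S : Set (ℕ →₀ ℕ)) : ℚ⟦X⟧ :=
  PowerSeries.mk fun n => (({f | IsPartitionOf n f} ∩ S).ncard : ℚ)

lemma coeff_gf (S : Set (ℕ →₀ ℕ)) (n : ℕ) :
    coeff n (gf S) = (({f | IsPartitionOf n f} ∩ S).ncard : ℚ) := coeff_mk _ _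

lemma gf_union {S T : Set (ℕ →₀ ℕ)} (h : Disjoint S T) : gf (S ∪ T) = gf S + gf T := by
  ext n
  rw [map_add, coeff_gf, coeff_gf, coeff_gf, Set.inter_union_distrib_left,
    Set.ncard_union_eq (h.mono Set.inter_subset_right Set.inter_subset_right)
      ((finite_partitions n).inter_of_left _) ((finite_partitions n).inter_of_left _)]
  push_cast
  rfl

lemma weight_add (f g : ℕ →₀ ℕ) : (f + g).sum (fun t m => t * m) =
    f.sum (fun t m => t * m) + g.sum (fun t m => t * m) :=
  Finsupp.sum_add_index' (fun _ => rfl) fun t m m' => mul_add t m m'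

/-- Adding a fixed multiset `g` of parts multiplies the generating function by a monomial. -/
lemma gf_shift (S : Set (ℕ →₀ ℕ)) (g : ℕ →₀ ℕ) (hg : g 0 = 0) :
    gf ((· + g) '' S) = X ^ (g.sum fun t m => t * m) * gf S := by
  ext n
  rw [coeff_X_pow_mul', coeff_gf]
  split_ifs with h
  · obtain ⟨m, rfl⟩ := Nat.exists_eq_add_of_le' h
    rw [Nat.add_sub_cancel, coeff_gf,
      ← Set.ncard_image_of_injective ({f | IsPartitionOf m f} ∩ S) (add_left_injective g)]
    refine congrArg (fun s : Set (ℕ →₀ ℕ) => (s.ncard : ℚ)) ?_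
    ext f
    constructor
    · rintro ⟨⟨h0, hf⟩, f, hS, rfl⟩
      refine ⟨f, ⟨⟨by simpa [hg] using h0, ?_⟩, hS⟩, rfl⟩
      simpa [weight_add] using hf
    · rintro ⟨f, ⟨⟨h0, hf⟩, hS⟩, rfl⟩
      refine ⟨⟨by simp [hg, h0], ?_⟩, f, hS, rfl⟩
      simp only [weight_add, hf]
  · rw [Nat.cast_eq_zero, Set.ncard_eq_zero ((finite_partitions n).inter_of_left _)]
    refine Set.eq_empty_of_forall_notMem ?_
    rintro _ ⟨⟨-, hf⟩, f, -, rfl⟩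
    simp only [weight_add] at hf
    omega

/-- If `S` contains the empty partition and all parts of its members are at least `M`, then `gf S`
agrees with `1` modulo `X ^ M`. -/
lemma gf_congMod_one {S : Set (ℕ →₀ ℕ)} {M : ℕ} (h0 : 0 ∈ S)
    (hS : ∀ f ∈ S, ∀ t < M, f t = 0) : CongMod M (gf S) 1 := by
  rw [congMod_iff]
  intro n hn
  have key : ∀ f ∈ S, IsPartitionOf n f → f = 0 := by
    rintro f hf ⟨-, hw⟩
    ext t
    by_contra ht
    have h₁ : t * f t ≤ n := by
      rw [← hw]
      exact Finset.single_le_sum (f := fun t => t * f t) (fun _ _ => Nat.zero_le _)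
        (Finsupp.mem_support_iff.2 ht)
    have h₂ := Nat.pos_of_ne_zero ht
    exact ht (hS f hf t (by nlinarith))
  rw [coeff_gf, coeff_one]
  split_ifs with hn0
  · subst hn0
    have : ({f | IsPartitionOf 0 f} ∩ S) = {0} := by
      ext f
      constructor
      · rintro ⟨hf, hfS⟩
        exact key f hfS hf
      · rintro rfl
        exact ⟨⟨rfl, by simp⟩, h0⟩
    rw [this]; simp
  · have : ({f | IsPartitionOf n f} ∩ S) = ∅ := by
      refine Set.eq_empty_of_forall_notMem ?_
      rintro f ⟨hf, hfS⟩
      obtain rfl := key f hfS hf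
      exact hn0 (by simpa using hf.2.symm)
    rw [this]; simp

/-- Euler's product for the partitions with parts `≤ L` restricted by `p`. -/
lemma gf_mul_partProd (p : ℕ → Prop) (L : ℕ) :
    gf {f | f 0 = 0 ∧ ∀ t, f t ≠ 0 → p t ∧ t ≤ L} * partProd p L = 1 := by
  induction L with
  | zero =>
    rw [partProd, range_zero, prod_empty, mul_one]
    ext n
    refine congMod_iff.1 (gf_congMod_one (M := n + 1) (by simp) ?_) n (Nat.lt_succ_self n)
    rintro f ⟨h0, hf⟩ t -
    by_contra ht
    have := (hf t ht).2
    obtain rfl : t = 0 := by omega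
    exact ht h0
  | succ L ih =>
    rw [partProd, prod_range_succ, ← partProd]
    by_cases hp : p (L + 1)
    · rw [if_pos hp]
      -- split according to whether `L + 1` occurs, and remove one occurrence if it does
      have hsplit : {f : ℕ →₀ ℕ | f 0 = 0 ∧ ∀ t, f t ≠ 0 → p t ∧ t ≤ L + 1} =
          {f | f 0 = 0 ∧ ∀ t, f t ≠ 0 → p t ∧ t ≤ L} ∪ (· + Finsupp.single (L + 1) 1) ''
            {f | f 0 = 0 ∧ ∀ t, f t ≠ 0 → p t ∧ t ≤ L + 1} := by
        ext f
        constructor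
        · rintro ⟨h0, hf⟩
          by_cases hL : f (L + 1) = 0
          · refine Or.inl ⟨h0, fun t ht => ⟨(hf t ht).1, ?_⟩⟩
            have := (hf t ht).2
            have : t ≠ L + 1 := by rintro rfl; exact ht hL
            omega
          · refine Or.inr ⟨f - Finsupp.single (L + 1) 1, ⟨by simp [h0], fun t ht => hf t ?_⟩, ?_⟩
            · intro h; simp [h] at ht
            · refine tsub_add_cancel_of_le ?_
              rw [Finsupp.single_le_iff]
              omega
        · rintro (⟨h0, hf⟩ | ⟨f, ⟨h0, hf⟩, rfl⟩)
          · exact ⟨h0, fun t ht => ⟨(hf t ht).1, (hf t ht).2.trans (Nat.le_succ L)⟩⟩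
          · refine ⟨by simp [h0], fun t ht => ?_⟩
            by_cases htL : t = L + 1
            · subst htL; exact ⟨hp, le_rfl⟩
            · refine hf t ?_
              simpa [Finsupp.single_apply, Ne.symm htL] using ht
      have hdisj : Disjoint {f : ℕ →₀ ℕ | f 0 = 0 ∧ ∀ t, f t ≠ 0 → p t ∧ t ≤ L}
          ((· + Finsupp.single (L + 1) 1) ''
            {f | f 0 = 0 ∧ ∀ t, f t ≠ 0 → p t ∧ t ≤ L + 1}) := by
        rw [Set.disjoint_left]
        rintro _ ⟨-, hf⟩ ⟨f, -, rfl⟩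
        have := (hf (L + 1) (by simp)).2
        omega
      have h := gf_union hdisj
      rw [← hsplit, gf_shift _ _ (by simp), Finsupp.sum_single_index (by simp), mul_one] at h
      linear_combination ih + partProd p L * h
    · rw [if_neg hp, mul_one, ← ih]
      congr 2
      ext f
      refine and_congr_right fun _ => forall_congr' fun t => imp_congr_right fun ht => ?_
      refine and_congr_right fun hpt => ?_
      have : t ≠ L + 1 := by rintro rfl; exact hp hpt
      omega

/-- The difference-condition partitions with all parts `> 2 N`, where `a = i - 1` bounds the
number of parts `2 N + 1` and `2 N + 2`, and `a + b = k - 1`. -/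
def S (a b N : ℕ) : Set (ℕ →₀ ℕ) :=
  {f | (∀ t ≤ 2 * N, f t = 0) ∧ f (2 * N + 1) + f (2 * N + 2) ≤ a ∧ (∀ t, f (2 * t + 1) ≤ 1) ∧
    ∀ t, f (2 * t) + f (2 * t + 1) + f (2 * t + 2) ≤ a + b}

lemma S_zero (b N : ℕ) : S 0 b N = S b 0 (N + 1) := by
  ext f
  constructor
  · rintro ⟨h₁, h₂, h₃, h₄⟩
    refine ⟨fun t ht => ?_, ?_, h₃, by simpa using h₄⟩
    · rcases (show t ≤ 2 * N ∨ t = 2 * N + 1 ∨ t = 2 * N + 2 by omega) with h | rfl | rfl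
      · exact h₁ t h
      · omega
      · omega
    · have := h₄ (N + 1)
      simp only [mul_add, mul_one] at this ⊢
      omega
  · rintro ⟨h₁, h₂, h₃, h₄⟩
    refine ⟨fun t ht => h₁ t (by omega), ?_, h₃, by simpa using h₄⟩
    rw [h₁ _ (by omega), h₁ _ (by omega)]

/-- Removing `c` parts `2 N + 1` and `d` parts `2 N + 2` from partitions with parts `> 2 N`: what
remains has parts `> 2 N + 2`, and the constraint at `2 N + 2` becomes a bound on its first two
multiplicities. -/
lemma image_S {a b N c d e : ℕ} (hc : c ≤ 1) (hcd : c + d ≤ e + b) (hd : d + a = e + b)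
    (hae : a ≤ e + b) :
    (· + (Finsupp.single (2 * N + 1) c + Finsupp.single (2 * N + 2) d)) ''
        S a (e + b - a) (N + 1) =
      {f | (∀ t ≤ 2 * N, f t = 0) ∧ f (2 * N + 1) = c ∧ f (2 * N + 2) = d ∧
        (∀ t, f (2 * t + 1) ≤ 1) ∧
        ∀ t, f (2 * t) + f (2 * t + 1) + f (2 * t + 2) ≤ e + b} := by
  have hab : a + (e + b - a) = e + b := by omega
  ext f
  constructor
  · rintro ⟨f, ⟨h₁, h₂, h₃, h₄⟩, rfl⟩
    rw [hab] at h₄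
    simp only [mul_add, mul_one] at h₁ h₂
    have z₀ := h₁ (2 * N) (by omega)
    have z₁ := h₁ (2 * N + 1) (by omega)
    have z₂ := h₁ (2 * N + 2) (by omega)
    refine ⟨fun t ht => ?_, ?_, ?_, fun t => ?_, fun t => ?_⟩
    · have e₁ : 2 * N + 1 ≠ t := by omega
      have e₂ : 2 * N + 2 ≠ t := by omega
      simp [e₁, e₂, h₁ t (by omega)]
    · simp [z₁]
    · simp [z₂]
    · have := h₃ t
      rcases eq_or_ne t N with rfl | ht
      · simp [z₁, hc]
      · have e₁ : ¬ 2 * N + 1 = 2 * t + 1 := by omega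
        have e₂ : ¬ 2 * N + 2 = 2 * t + 1 := by omega
        simpa [Finsupp.single_apply, e₁, e₂, ht.symm] using this
    · have := h₄ t
      rcases eq_or_ne t N with rfl | ht
      · have e₁ : ¬ 2 * t + 1 = 2 * t := by omega
        simp [z₀, z₁, z₂, hcd]
      rcases eq_or_ne t (N + 1) with rfl | ht'
      · have e₂ : ¬ 2 * N + 1 = 2 * N + 2 + 1 := by omega
        simp only [mul_add, mul_one] at this ⊢
        simp [z₂]
        omega
      · have e₁ : ¬ 2 * N + 1 = 2 * t := by omega
        have e₂ : ¬ 2 * N + 1 = 2 * t + 1 := by omega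
        have e₃ : ¬ 2 * N + 1 = 2 * t + 2 := by omega
        have e₄ : ¬ 2 * N + 2 = 2 * t := by omega
        have e₅ : ¬ 2 * N + 2 = 2 * t + 1 := by omega
        have e₆ : ¬ 2 * N + 2 = 2 * t + 2 := by omega
        simpa only [Finsupp.add_apply, Finsupp.single_apply, e₁, e₂, e₃, e₄, e₅, e₆, if_false,
          add_zero] using this
  · rintro ⟨h₁, hfc, hfd, h₃, h₄⟩
    refine ⟨f - (Finsupp.single (2 * N + 1) c + Finsupp.single (2 * N + 2) d),
      ⟨fun t ht => ?_, ?_, fun t => ?_, fun t => ?_⟩, ?_⟩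
    · rcases (show t ≤ 2 * N ∨ t = 2 * N + 1 ∨ t = 2 * N + 2 by omega) with h | rfl | rfl
      · simp [h₁ t h]
      · simp [hfc]
      · simp [hfd]
    · have := h₄ (N + 1)
      simp only [mul_add, mul_one] at this ⊢
      simp only [Finsupp.tsub_apply]
      omega
    · exact (Nat.sub_le _ _).trans (h₃ t)
    · rw [hab]
      refine le_trans ?_ (h₄ t)
      simp only [Finsupp.tsub_apply]
      omega
    · refine tsub_add_cancel_of_le fun t => ?_
      rcases eq_or_ne t (2 * N + 1) with rfl | e₁
      · simp [hfc]
      rcases eq_or_ne t (2 * N + 2) with rfl | e₂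
      · simp [hfd]
      simp [e₁.symm, e₂.symm]

/-- The combinatorial recurrence matching `F_rec`: if `2 N + 1` and `2 N + 2` together occur
`a + 1` times, then `2 N + 1` occurs either never or once. -/
lemma gf_rec (a b N : ℕ) :
    gf (S (a + 1) b N) = gf (S a (b + 1) N) + (X ^ ((2 * N + 2) * (a + 1)) *
      gf (S b (a + 1) (N + 1)) + X ^ (2 * N + 1 + (2 * N + 2) * a) * gf (S (b + 1) a (N + 1))) := by
  have i₁ := image_S (a := b) (b := b) (N := N) (c := 0) (d := a + 1) (e := a + 1)
    (by omega) (by omega) (by omega) (by omega)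
  have i₂ := image_S (a := b + 1) (b := b) (N := N) (c := 1) (d := a) (e := a + 1)
    (by omega) (by omega) (by omega) (by omega)
  rw [show a + 1 + b - b = a + 1 by omega] at i₁
  rw [show a + 1 + b - (b + 1) = a by omega] at i₂
  have g₁ := gf_shift (S b (a + 1) (N + 1))
    (Finsupp.single (2 * N + 1) 0 + Finsupp.single (2 * N + 2) (a + 1)) (by simp)
  have g₂ := gf_shift (S (b + 1) a (N + 1))
    (Finsupp.single (2 * N + 1) 1 + Finsupp.single (2 * N + 2) a) (by simp)
  rw [weight_add, Finsupp.sum_single_index (by simp), Finsupp.sum_single_index (by simp)] at g₁ g₂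
  rw [mul_zero, zero_add] at g₁
  rw [mul_one] at g₂
  rw [← g₁, ← g₂, i₁, i₂, ← gf_union, ← gf_union]
  · congr 1
    ext f
    simp only [S, Set.mem_union, Set.mem_ofPred_eq, show a + (b + 1) = a + 1 + b by ring]
    constructor
    · rintro ⟨h₁, h₂, h₃, h₄⟩
      have := h₃ N
      rcases (show f (2 * N + 1) + f (2 * N + 2) ≤ a ∨
        (f (2 * N + 1) = 0 ∧ f (2 * N + 2) = a + 1) ∨
        (f (2 * N + 1) = 1 ∧ f (2 * N + 2) = a) by omega) with h | ⟨h, h'⟩ | ⟨h, h'⟩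
      · exact Or.inl ⟨h₁, h, h₃, h₄⟩
      · exact Or.inr (Or.inl ⟨h₁, h, h', h₃, h₄⟩)
      · exact Or.inr (Or.inr ⟨h₁, h, h', h₃, h₄⟩)
    · rintro (⟨h₁, h, h₃, h₄⟩ | ⟨h₁, h, h', h₃, h₄⟩ | ⟨h₁, h, h', h₃, h₄⟩)
      · exact ⟨h₁, by omega, h₃, h₄⟩
      · exact ⟨h₁, by omega, h₃, h₄⟩
      · exact ⟨h₁, by omega, h₃, h₄⟩
  · rw [Set.disjoint_left]
    rintro f ⟨-, h, -⟩ (⟨-, h', h'', -⟩ | ⟨-, h', h'', -⟩) <;> omega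
  · rw [Set.disjoint_left]
    rintro f ⟨-, h, -⟩ ⟨-, h', -⟩
    omega

/-- The recurrences and the limit at large `N` determine the generating functions. -/
lemma gf_S_congMod {M : ℕ} (hM : 0 < M) (s : ℕ) : ∀ N, N + s = M → ∀ a b,
    CongMod M (gf (S a b N)) (E M * (D M)⁻¹ * F M a b N) := by
  induction s with
  | zero =>
    rintro N rfl a b
    refine CongMod.trans ?_ (F_top hM a b).symm
    refine gf_congMod_one ⟨by simp, by simp, by simp, by simp⟩ fun f hf t ht => hf.1 t ?_
    omega
  | succ s ih =>
    intro N hN a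
    have ih := ih (N + 1) (by omega)
    induction a with
    | zero =>
      intro b
      rw [S_zero]
      exact (ih b 0).trans ((F_zero M b N).symm.mul_left _)
    | succ a iha =>
      intro b
      rw [gf_rec]
      refine CongMod.trans ?_ ((F_rec M a b N).symm.mul_left _)
      refine ((iha (b + 1)).add (((ih b (a + 1)).mul_left _).add
        ((ih (b + 1) a).mul_left _))).trans (.of_eq ?_)
      ring

/-- The two generating functions agree modulo every power of `X`. -/
lemma gf_congMod (a b M : ℕ) :
    CongMod M (gf {f | f 0 = 0 ∧ ∀ t, f t ≠ 0 → Allowed a b t ∧ t ≤ 4 * (a + b + 1) * M})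
      (gf (S a b 0)) := by
  rcases Nat.eq_zero_or_pos M with rfl | hM
  · simp [CongMod]
  have h₁ := (gf_S_congMod hM M 0 (zero_add M) a b).mul_right
    (partProd (Allowed a b) (4 * (a + b + 1) * M))
  have h₂ := h₁.trans (series_mul_partProd a b M)
  have h₃ := gf_mul_partProd (Allowed a b) (4 * (a + b + 1) * M)
  refine CongMod.cancel (c := partProd (Allowed a b) (4 * (a + b + 1) * M)) ?_ ?_
  · rw [partProd, map_prod]
    refine prod_eq_one fun s _ => ?_
    split_ifs <;> simp
  · rw [mul_comm, h₃, mul_comm]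
    exact h₂.symm

end AGG

theorem andrews_gollnitz_gordon (k i n : ℕ) (hi : 1 ≤ i) (hik : i ≤ k) :
    {f : ℕ →₀ ℕ | IsPartitionOf n f ∧
      ∀ t, f t ≠ 0 → t % 4 ≠ 2 ∧ t % (4 * k) ≠ 0 ∧
        t % (4 * k) ≠ 2 * i - 1 ∧ t % (4 * k) ≠ 4 * k - (2 * i - 1)}.ncard
    = {f : ℕ →₀ ℕ | IsPartitionOf n f ∧
        f 1 + f 2 ≤ i - 1 ∧
        (∀ t, f (2 * t + 1) ≤ 1) ∧
        (∀ t, f (2 * t) + f (2 * t + 1) + f (2 * t + 2) ≤ k - 1)}.ncard := by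
  obtain ⟨a, rfl⟩ := Nat.exists_eq_add_of_le' hi
  obtain ⟨b, rfl⟩ : ∃ b, k = a + b + 1 := ⟨k - (a + 1), by omega⟩
  have h := AGG.congMod_iff.1 (AGG.gf_congMod a b (n + 1)) n (Nat.lt_succ_self n)
  rw [AGG.coeff_gf, AGG.coeff_gf, Nat.cast_inj] at h
  have e₁ : 2 * (a + 1) - 1 = 2 * a + 1 := by omega
  have e₂ : 4 * (a + b + 1) - (2 * a + 1) = 2 * a + 4 * b + 3 := by omega
  rw [e₁, e₂, Nat.add_sub_cancel, Nat.add_sub_cancel]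
  convert h using 2
  · ext f
    refine and_congr_right fun hf => ⟨fun h => ⟨hf.1, fun t ht => ⟨h t ht, ?_⟩⟩,
      fun h t ht => (h.2 t ht).1⟩
    -- every part of a partition of `n` is at most `n`
    have h₁ : t * f t ≤ n := by
      rw [← hf.2]
      exact Finset.single_le_sum (f := fun t => t * f t) (fun _ _ => Nat.zero_le _)
        (Finsupp.mem_support_iff.2 ht)
    have h₂ := Nat.pos_of_ne_zero ht
    nlinarith [Nat.zero_le ((a + b) * (n + 1))]
  · ext f
    refine and_congr_right fun hf => ⟨fun h => ⟨fun t ht => ?_, h⟩, fun h => h.2⟩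
    obtain rfl : t = 0 := by omega
    exact hf.1
end
end

section
/- For integers k ≥ i ≥ 1, the following identity of formal power series in q holds: ∑_{N_1 ≥ N_2 ≥ … ≥ N_{k−1} ≥ 0} q^{N_1² + … + N_{k−1}² + N_i + … + N_{k−1}} / ((q;q)_{N_1−N_2} (q;q)_{N_2−N_3} ⋯ (q;q)_{N_{k−1}}) = (q^i, q^{2k+1−i}, q^{2k+1}; q^{2k+1})_∞ / (q;q)_∞. -/
/-!
The proof uses Bailey chains. Write `(x)_n` for `(x;x)_n` and let
`K_a(n, m) = 1 / ((x)_{n-m} (x)_{n+m+a})`, for `a = 0, 1` and `0 ≤ m ≤ n`, be the Bailey kernel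
(`bker`). The `q`-Vandermonde sum gives the Bailey lemma (`bailey_step`)
`∑_s x^(s² + a s) / (x)_{N-s} * K_a(s, m) = x^(m² + a m) K_a(N, m)`,
so an iterated sum with Gaussian weights acts diagonally on expansions in the `K_a(·, m)`.

The innermost step of the multisum starts from the sequence `δ_{n,0}`, whose expansion in `K_1` is
known (`unit_bailey`). The variables `N_{k-1}, …, N_i` carry weights `q^(N² + N)` and are summed with
`a = 1`. The relation
`(1 - x^(2m+1)) K_1(n, m) = K_0(n, m) - x^(2m+1) K_0(n, m+1)` (`bker_one_eq`) then changes the kernel,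
and `N_{i-1}, …, N_1`, with weights `q^(N²)`, are summed with `a = 0` (`chain_eq`). The result is a
finite identity with all variables bounded by `N`; letting `N → ∞` turns the multisum into
`(1/(q)_∞) ∑_{r ≥ 0} (-1)^r q^(…) (1 - q^((2r+1) i))` (`agSum_eq`), which is evaluated by the Jacobi
triple product (`jacobi_triple`). The latter is itself the limit of a finite identity that follows
from the `q`-binomial theorem (`finite_jacobi`).

All limits are taken in the `q`-adic topology of `ℚ((q))`. They are controlled by the subgroups
`van n = q^n ℚ[[q]]` and follow from one exchange of limit and sum, `tendsto_tannery`.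
-/

/- The Andrews–Gordon identity, as an identity in the field of formal Laurent
series over ℚ (which contains the formal power series ring). -/

noncomputable section
open scoped Classical

/-- The formal variable `q`. -/
def q : LaurentSeries ℚ := HahnSeries.single 1 1

/-- Finite q-Pochhammer symbol `(a;x)_n`. -/
def poch (a x : LaurentSeries ℚ) (n : ℕ) : LaurentSeries ℚ :=
  ∏ j ∈ Finset.range n, (1 - a * x ^ j)

/-- Infinite q-Pochhammer symbol `(a;x)_∞`. -/
def pochInf (a x : LaurentSeries ℚ) : LaurentSeries ℚ :=
  ∏' j : ℕ, (1 - a * x ^ j)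

/-- `N_{j+1}` with the convention `N_k = 0`, for a tuple `N : Fin (k-1) → ℕ`
(index `j` ranges over `Fin (k-1)`, so `N ⟨0⟩` is `N_1`). -/
def next {m : ℕ} (N : Fin m → ℕ) (j : Fin m) : ℕ :=
  if h : (j : ℕ) + 1 < m then N ⟨(j : ℕ) + 1, h⟩ else 0

open Filter Topology Finset

/-! ### The `q`-adic topology and infinite products -/

theorem v_q : Valued.v q = WithZero.exp (-1 : ℤ) :=
  LaurentSeries.valuation_single_zpow ℚ 1

theorem v_q_lt_one : Valued.v q < 1 := by
  rw [v_q, ← WithZero.exp_zero]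
  exact WithZero.exp_lt_exp.mpr (by norm_num)

theorem q_ne_zero : q ≠ 0 := by
  intro h
  have := v_q
  rw [h, map_zero] at this
  exact WithZero.exp_ne_zero this.symm

/-- The Laurent series all of whose terms have degree at least `n`, i.e. `q ^ n ℚ⟦q⟧`. -/
def van (n : ℕ) : AddSubgroup (LaurentSeries ℚ) where
  carrier := {f | Valued.v f ≤ Valued.v q ^ n}
  zero_mem' := by simp
  add_mem' := fun {a b} ha hb => by
    rw [Set.mem_ofPred_eq] at ha hb ⊢
    exact (Valuation.map_add _ _ _).trans (max_le ha hb)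
  neg_mem' := fun ha => by simpa [Valuation.map_neg] using ha

theorem mem_van {n : ℕ} {f : LaurentSeries ℚ} : f ∈ van n ↔ Valued.v f ≤ Valued.v q ^ n :=
  Set.mem_ofPred

theorem van_anti {m n : ℕ} (h : m ≤ n) {f : LaurentSeries ℚ} (hf : f ∈ van n) : f ∈ van m :=
  mem_van.mpr <| le_trans (mem_van.mp hf) (pow_le_pow_right_of_le_one' v_q_lt_one.le h)

theorem mul_mem_van {m n : ℕ} {f g : LaurentSeries ℚ} (hf : f ∈ van m) (hg : g ∈ van n) :
    f * g ∈ van (m + n) := by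
  rw [mem_van, map_mul, pow_add]
  exact mul_le_mul' (mem_van.mp hf) (mem_van.mp hg)

theorem q_pow_mem_van (n : ℕ) : q ^ n ∈ van n := by
  rw [mem_van, map_pow]

theorem mem_van_zero_of_v_eq_one {f : LaurentSeries ℚ} (h : Valued.v f = 1) : f ∈ van 0 := by
  rw [mem_van, h, pow_zero]

theorem mem_nhds_iff_van {s : Set (LaurentSeries ℚ)} {a : LaurentSeries ℚ} :
    s ∈ 𝓝 a ↔ ∃ n, ∀ f, f - a ∈ van n → f ∈ s := by
  rw [Valued.mem_nhds]
  constructor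
  · rintro ⟨γ, hγ⟩
    have h0 : MonoidWithZeroHom.ValueGroup₀.embedding γ.1 ≠ (0 : WithZero (Multiplicative ℤ)) := by
      simp
    obtain ⟨n, hn⟩ : ∃ n : ℕ, Valued.v q ^ n <
        (MonoidWithZeroHom.ValueGroup₀.embedding γ.1 : WithZero (Multiplicative ℤ)) := by
      exact exists_pow_lt₀ v_q_lt_one (Units.mk0 _ h0)
    refine ⟨n, fun f hf => hγ ?_⟩
    rw [Set.mem_ofPred_eq, Valuation.restrict_lt_iff_lt_embedding]
    exact lt_of_le_of_lt (mem_van.mp hf) hn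
  · rintro ⟨n, hn⟩
    have h0 : Valued.v.restrict (q ^ n) ≠ 0 := by
      simp [q_ne_zero]
    refine ⟨Units.mk0 _ h0, fun f hf => hn f ?_⟩
    rw [Set.mem_ofPred_eq, Units.val_mk0, Valuation.restrict_lt_iff] at hf
    rw [mem_van, ← map_pow]
    exact hf.le

theorem tendsto_iff_van {ι : Type*} {l : Filter ι} {f : ι → LaurentSeries ℚ}
    {a : LaurentSeries ℚ} : Tendsto f l (𝓝 a) ↔ ∀ n, ∀ᶠ i in l, f i - a ∈ van n := by
  constructor
  · intro h n
    exact h (mem_nhds_iff_van.mpr ⟨n, fun f hf => hf⟩)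
  · intro h s hs
    obtain ⟨n, hn⟩ := mem_nhds_iff_van.mp hs
    exact (h n).mono fun i hi => hn _ hi

/-- Each `van n` is an open subgroup. -/
instance nonarchL : NonarchimedeanAddGroup (LaurentSeries ℚ) where
  is_nonarchimedean := by
    intro U hU
    obtain ⟨n, hn⟩ := mem_nhds_iff_van.mp hU
    refine ⟨⟨van n, AddSubgroup.isOpen_of_mem_nhds (van n) (g := 0) ?_⟩, fun f hf => hn f (by rw [sub_zero]; exact hf)⟩
    · exact mem_nhds_iff_van.mpr ⟨n, fun f hf => by simpa using hf⟩

theorem v_one_sub {f : LaurentSeries ℚ} {n : ℕ} (hn : 1 ≤ n) (hf : f ∈ van n) :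
    Valued.v (1 - f) = 1 := by
  apply Valuation.map_one_sub_of_lt
  refine lt_of_le_of_lt (mem_van.mp (van_anti hn hf)) ?_
  rw [pow_one]
  exact v_q_lt_one

theorem v_prod_one_sub {ι : Type*} (s : Finset ι) (f : ι → LaurentSeries ℚ)
    (hf : ∀ j ∈ s, f j ∈ van 1) : Valued.v (∏ j ∈ s, (1 - f j)) = 1 := by
  rw [map_prod]
  exact Finset.prod_eq_one fun j hj => v_one_sub le_rfl (hf j hj)

theorem prod_one_sub_sub_one_mem {ι : Type*} (n : ℕ) (s : Finset ι) (f : ι → LaurentSeries ℚ)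
    (hf : ∀ j ∈ s, f j ∈ van n) : ∏ j ∈ s, (1 - f j) - 1 ∈ van n := by
  induction s using Finset.induction_on with
  | empty => simp
  | insert a s ha ih =>
    have h1 := ih fun j hj => hf j (Finset.mem_insert_of_mem hj)
    have h2 := hf a (Finset.mem_insert_self _ _)
    rw [Finset.prod_insert ha]
    have h3 : (1 - f a) * ∏ j ∈ s, (1 - f j) - 1
        = (∏ j ∈ s, (1 - f j) - 1) - f a * (∏ j ∈ s, (1 - f j) - 1) - f a := by ring
    rw [h3]
    exact (van n).sub_mem ((van n).sub_mem h1
      (van_anti (Nat.le_add_left _ _) (mul_mem_van h2 h1))) h2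

section Pochhammer

variable {c d : ℕ}

theorem factor_mem (c d j : ℕ) (hd : 1 ≤ d) : q ^ c * (q ^ d) ^ j ∈ van (c + j) := by
  rw [← pow_mul, ← pow_add]
  exact van_anti (by nlinarith) (q_pow_mem_van _)

theorem v_poch (hc : 1 ≤ c) (hd : 1 ≤ d) (n : ℕ) : Valued.v (poch (q ^ c) (q ^ d) n) = 1 :=
  v_prod_one_sub _ _ fun j _ => van_anti (by omega) (factor_mem c d j hd)

/-- Any finite partial product over a set containing `{0, …, n-1}` agrees with `(q^c; q^d)_n` up to
order `n`. -/
theorem prod_sub_poch_mem (hc : 1 ≤ c) (hd : 1 ≤ d) {n : ℕ} {s : Finset ℕ} (hs : range n ⊆ s) :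
    ∏ j ∈ s, (1 - q ^ c * (q ^ d) ^ j) - poch (q ^ c) (q ^ d) n ∈ van (n + 1) := by
  rw [← Finset.prod_sdiff hs]
  have h : ∏ j ∈ s \ range n, (1 - q ^ c * (q ^ d) ^ j) - 1 ∈ van (n + 1) := by
    refine prod_one_sub_sub_one_mem _ _ _ fun j hj => van_anti ?_ (factor_mem c d j hd)
    simp only [Finset.mem_sdiff, Finset.mem_range] at hj
    omega
  have h2 := mul_mem_van h (mem_van_zero_of_v_eq_one (v_poch hc hd n))
  rw [sub_mul, one_mul] at h2
  exact h2

theorem exists_hasProd (hc : 1 ≤ c) (hd : 1 ≤ d) :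
    ∃ A, HasProd (fun j : ℕ => 1 - q ^ c * (q ^ d) ^ j) A := by
  have hC : CauchySeq (poch (q ^ c) (q ^ d)) := by
    apply NonarchimedeanAddGroup.cauchySeq_of_tendsto_sub_nhds_zero
    rw [tendsto_iff_van]
    intro n
    filter_upwards [eventually_ge_atTop n] with m hm
    rw [sub_zero]
    exact van_anti (by omega) (prod_sub_poch_mem hc hd (n := m) (s := range (m + 1))
      (Finset.range_subset_range.mpr (by omega)))
  obtain ⟨A, hA⟩ := cauchySeq_tendsto_of_complete hC
  refine ⟨A, ?_⟩
  change Tendsto _ _ _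
  rw [tendsto_iff_van] at hA ⊢
  intro n
  obtain ⟨m, hm1, hm2⟩ := ((hA n).and (eventually_ge_atTop n)).exists
  rw [SummationFilter.unconditional_filter]
  filter_upwards [eventually_ge_atTop (range m)] with s hs
  have := (van n).add_mem (van_anti (by omega) (prod_sub_poch_mem hc hd hs)) hm1
  simpa using this

theorem tendsto_poch (hc : 1 ≤ c) (hd : 1 ≤ d) :
    Tendsto (poch (q ^ c) (q ^ d)) atTop (𝓝 (pochInf (q ^ c) (q ^ d))) := by
  obtain ⟨A, hA⟩ := exists_hasProd hc hd
  rw [pochInf, hA.tprod_eq]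
  exact hA.tendsto_prod_nat

theorem poch_sub_pochInf_mem (hc : 1 ≤ c) (hd : 1 ≤ d) (n : ℕ) :
    poch (q ^ c) (q ^ d) n - pochInf (q ^ c) (q ^ d) ∈ van (n + 1) := by
  obtain ⟨m, hm1, hm2⟩ := ((tendsto_iff_van.mp (tendsto_poch hc hd) (n + 1)).and
    (eventually_ge_atTop n)).exists
  have := (van (n + 1)).sub_mem hm1 (prod_sub_poch_mem hc hd (n := n) (s := range m)
    (Finset.range_subset_range.mpr hm2))
  convert this using 1
  simp only [poch]
  ring

theorem v_pochInf (hc : 1 ≤ c) (hd : 1 ≤ d) : Valued.v (pochInf (q ^ c) (q ^ d)) = 1 := by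
  have h := v_one_sub le_rfl (poch_sub_pochInf_mem hc hd 0)
  simpa [poch] using h

end Pochhammer

theorem ne_zero_of_v_eq_one {f : LaurentSeries ℚ} (h : Valued.v f = 1) : f ≠ 0 := by
  rintro rfl
  simp at h

theorem inv_sub_inv_mem {f g : LaurentSeries ℚ} {n : ℕ} (hf : Valued.v f = 1)
    (hg : Valued.v g = 1) (h : f - g ∈ van n) : f⁻¹ - g⁻¹ ∈ van n := by
  have hf0 := ne_zero_of_v_eq_one hf
  have hg0 := ne_zero_of_v_eq_one hg
  have : f⁻¹ - g⁻¹ = -(f - g) * (f⁻¹ * g⁻¹) := by field_simp; ring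
  rw [this, mem_van, map_mul, map_mul, map_inv₀, map_inv₀, hf, hg, Valuation.map_neg]
  simpa using mem_van.mp h

theorem mul_sub_mul_mem {f g f' g' : LaurentSeries ℚ} {n : ℕ} (hf : Valued.v f = 1)
    (hg' : Valued.v g' = 1) (h : f - f' ∈ van n) (h' : g - g' ∈ van n) :
    f * g - f' * g' ∈ van n := by
  have : f * g - f' * g' = f * (g - g') + (f - f') * g' := by ring
  rw [this]
  refine (van n).add_mem ?_ ?_
  · simpa using mul_mem_van (mem_van_zero_of_v_eq_one hf) h'
  · simpa using mul_mem_van h (mem_van_zero_of_v_eq_one hg')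

/-- A discrete Tannery theorem: finite sums over an exhausting sequence of index sets, whose
terms approximate `c i * G` to order `n` uniformly in `i`, converge to `(∑' i, c i) * G`. -/
theorem tendsto_tannery {ι : Type*} {F : ℕ → Finset ι} (hF : Tendsto F atTop atTop)
    {c : ι → LaurentSeries ℚ} (hc : Summable c) (G : LaurentSeries ℚ) (f : ℕ → ι → LaurentSeries ℚ)
    (hf : ∀ n, ∀ i ∈ F n, f n i - c i * G ∈ van n) :
    Tendsto (fun n => ∑ i ∈ F n, f n i) atTop (𝓝 ((∑' i, c i) * G)) := by
  have h1 : Tendsto (fun n => ∑ i ∈ F n, c i * G) atTop (𝓝 ((∑' i, c i) * G)) :=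
    ((hc.hasSum.mul_right G).comp hF : _)
  have h2 : Tendsto (fun n => ∑ i ∈ F n, (f n i - c i * G)) atTop (𝓝 0) := by
    rw [tendsto_iff_van]
    intro n
    filter_upwards [eventually_ge_atTop n] with m hm
    rw [sub_zero]
    exact (van n).sum_mem fun i hi => van_anti hm (hf m i hi)
  simpa using h2.add h1

theorem summable_of_mem_van {c : ℕ → LaurentSeries ℚ} (hc : ∀ m, c m ∈ van m) : Summable c := by
  apply NonarchimedeanAddGroup.summable_of_tendsto_cofinite_zero
  rw [Nat.cofinite_eq_atTop, tendsto_iff_van]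
  intro n
  filter_upwards [eventually_ge_atTop n] with m hm
  rw [sub_zero]
  exact van_anti hm (hc m)

/-! ### Finite identities: Gaussian binomials, Bailey kernels, finite triple product -/

section Algebra

variable {x : LaurentSeries ℚ}

theorem poch_zero (a x : LaurentSeries ℚ) : poch a x 0 = 1 := by simp [poch]

theorem poch_self_succ (x : LaurentSeries ℚ) (n : ℕ) :
    poch x x (n + 1) = poch x x n * (1 - x ^ (n + 1)) := by
  rw [poch, Finset.prod_range_succ, ← poch, pow_succ' x n]

theorem poch_succ' (a x : LaurentSeries ℚ) (n : ℕ) :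
    poch a x (n + 1) = (1 - a) * poch (a * x) x n := by
  rw [poch, Finset.prod_range_succ', poch, mul_comm, pow_zero, mul_one]
  congr 1
  exact Finset.prod_congr rfl fun j _ => by ring

theorem poch_add (a x : LaurentSeries ℚ) (m n : ℕ) :
    poch a x (m + n) = poch a x m * poch (a * x ^ m) x n := by
  rw [poch, Finset.prod_range_add, poch, poch]
  congr 1
  exact Finset.prod_congr rfl fun j _ => by ring

/-- The Gaussian binomial coefficient `[n, k]` in base `x`, defined by the `q`-Pascal rule. -/
def qb (x : LaurentSeries ℚ) : ℕ → ℕ → LaurentSeries ℚ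
  | _, 0 => 1
  | 0, _ + 1 => 0
  | n + 1, k + 1 => x ^ (k + 1) * qb x n (k + 1) + qb x n k

theorem qb_zero_right (x : LaurentSeries ℚ) (n : ℕ) : qb x n 0 = 1 := by
  cases n <;> rfl

theorem qb_succ_succ (x : LaurentSeries ℚ) (n k : ℕ) :
    qb x (n + 1) (k + 1) = x ^ (k + 1) * qb x n (k + 1) + qb x n k := rfl

theorem qb_eq_zero (x : LaurentSeries ℚ) : ∀ {n k : ℕ}, n < k → qb x n k = 0
  | 0, k + 1, _ => rfl
  | n + 1, k + 1, h => by
    rw [qb_succ_succ, qb_eq_zero x (show n < k + 1 by omega), qb_eq_zero x (show n < k by omega)]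
    simp

theorem qb_self (x : LaurentSeries ℚ) : ∀ n : ℕ, qb x n n = 1
  | 0 => rfl
  | n + 1 => by
    rw [qb_succ_succ, qb_eq_zero x (Nat.lt_succ_self n), qb_self x n]
    simp

theorem qb_mul_poch (x : LaurentSeries ℚ) (a b : ℕ) :
    qb x (a + b) a * (poch x x a * poch x x b) = poch x x (a + b) := by
  suffices H : ∀ s a b : ℕ, a + b = s →
      qb x (a + b) a * (poch x x a * poch x x b) = poch x x (a + b) from H _ a b rfl
  intro s
  induction s with
  | zero =>
    intro a b h
    obtain ⟨rfl, rfl⟩ : a = 0 ∧ b = 0 := by omega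
    simp [qb_zero_right, poch_zero]
  | succ s ih =>
    intro a b h
    rcases a with _ | a
    · simp [qb_zero_right, poch_zero]
    rcases b with _ | b
    · simp [qb_self, poch_zero]
    have h1 := ih (a + 1) b (by omega)
    have h2 := ih a (b + 1) (by omega)
    rw [show a + 1 + (b + 1) = (a + b + 1) + 1 by ring, qb_succ_succ, poch_self_succ x (a + b + 1)]
    rw [show a + 1 + b = a + b + 1 by ring, poch_self_succ x a] at h1
    rw [show a + (b + 1) = a + b + 1 by ring, poch_self_succ x b] at h2
    rw [poch_self_succ x a, poch_self_succ x b]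
    linear_combination x ^ (a + 1) * (1 - x ^ (b + 1)) * h1 + (1 - x ^ (a + 1)) * h2

theorem qb_eq_div (hx : ∀ n, poch x x n ≠ 0) {n k : ℕ} (h : k ≤ n) :
    qb x n k = poch x x n / (poch x x k * poch x x (n - k)) := by
  obtain ⟨b, rfl⟩ := Nat.exists_eq_add_of_le h
  rw [eq_div_iff (mul_ne_zero (hx _) (hx _)), Nat.add_sub_cancel_left, qb_mul_poch]

theorem choose_two_succ (n : ℕ) : (n + 1).choose 2 = n.choose 2 + n := by
  rw [Nat.choose_succ_succ' n 1, Nat.choose_one_right, add_comm]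

theorem choose_two_add (m r : ℕ) : (m + r).choose 2 = m.choose 2 + m * r + r.choose 2 := by
  induction r with
  | zero => simp
  | succ r ih => rw [← add_assoc, choose_two_succ, ih, choose_two_succ]; ring

theorem two_mul_choose_two (r : ℕ) : 2 * r.choose 2 + r = r ^ 2 := by
  induction r with
  | zero => simp
  | succ r ih => rw [choose_two_succ]; linarith

/-- The `q`-Pascal rule, summed against a test sequence. -/
theorem sum_qb_succ (x : LaurentSeries ℚ) (n : ℕ) (f : ℕ → LaurentSeries ℚ) :
    ∑ k ∈ range (n + 2), f k * qb x (n + 1) k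
      = ∑ k ∈ range (n + 1), (f k * x ^ k + f (k + 1)) * qb x n k := by
  have h : ∑ k ∈ range (n + 1), f k * x ^ k * qb x n k
      = ∑ k ∈ range (n + 1), f (k + 1) * x ^ (k + 1) * qb x n (k + 1) + f 0 := by
    have := Finset.sum_range_succ' (fun k => f k * x ^ k * qb x n k) (n + 1)
    rw [Finset.sum_range_succ, qb_eq_zero x (Nat.lt_succ_self n)] at this
    simpa [qb_zero_right] using this
  rw [Finset.sum_range_succ', qb_zero_right, mul_one]
  simp only [add_mul, Finset.sum_add_distrib, qb_succ_succ, mul_add]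
  rw [h]
  simp only [mul_assoc]
  ring

/-- The `q`-binomial theorem. -/
theorem q_binomial (x z : LaurentSeries ℚ) (n : ℕ) :
    poch z x n = ∑ k ∈ range (n + 1), (-1) ^ k * x ^ k.choose 2 * z ^ k * qb x n k := by
  induction n generalizing z with
  | zero => simp [poch_zero, qb_zero_right]
  | succ n ih =>
    rw [sum_qb_succ, poch_succ', ih, Finset.mul_sum, ← sub_eq_zero, ← Finset.sum_sub_distrib]
    -- both sides agree termwise after the factor `1 - z` is distributed
    refine Finset.sum_eq_zero fun k _ => ?_
    rw [choose_two_succ]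
    ring

/-- A limiting case of the `q`-Vandermonde sum. By the `q`-Pascal rule the left side at `(M + 1, b)`
equals the left side at `(M, b + 1)`. -/
theorem q_vandermonde_aux (hx : ∀ n, poch x x n ≠ 0) (M b : ℕ) :
    ∑ t ∈ range (M + 1), x ^ (t * (t + b)) / poch x x (t + b) * qb x M t
      = 1 / poch x x (M + b) := by
  induction M generalizing b with
  | zero => simp [qb_zero_right]
  | succ M ih =>
    rw [sum_qb_succ, show M + 1 + b = M + (b + 1) by ring, ← ih (b + 1)]
    refine Finset.sum_congr rfl fun t _ => ?_
    congr 1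
    have h0 := hx (t + b)
    have h1 := hx (t + (b + 1))
    have h2 := poch_self_succ x (t + b)
    rw [show t + 1 + b = t + (b + 1) by ring]
    rw [show t + b + 1 = t + (b + 1) by ring] at h2
    rw [div_mul_eq_mul_div, div_add_div _ _ h0 h1, div_eq_div_iff (mul_ne_zero h0 h1) h1, h2]
    ring

theorem q_vandermonde (hx : ∀ n, poch x x n ≠ 0) (M b : ℕ) :
    ∑ t ∈ range (M + 1), x ^ (t * (t + b)) / poch x x (M - t) *
        (1 / (poch x x t * poch x x (t + b)))
      = 1 / (poch x x M * poch x x (M + b)) := by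
  have h := q_vandermonde_aux hx M b
  rw [← one_div_mul_one_div, ← h, Finset.mul_sum]
  refine Finset.sum_congr rfl fun t ht => ?_
  rw [qb_eq_div hx (show t ≤ M by simpa [Nat.lt_succ_iff] using ht)]
  have h1 := hx M
  have h2 := hx t
  have h3 := hx (t + b)
  have h4 := hx (M - t)
  field_simp

/-- The Bailey kernel `1 / ((x;x)_{n-m} (x;x)_{n+m+a})`, extended by zero to `m > n`. The cases
`a = 0` and `a = 1` are the kernels of Bailey pairs relative to `1` and to `x`. -/
def bker (x : LaurentSeries ℚ) (a n m : ℕ) : LaurentSeries ℚ :=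
  if m ≤ n then 1 / (poch x x (n - m) * poch x x (n + m + a)) else 0

theorem bker_of_le (a : ℕ) {n m : ℕ} (h : m ≤ n) :
    bker x a n m = 1 / (poch x x (n - m) * poch x x (n + m + a)) := if_pos h

theorem bker_of_lt (a : ℕ) {n m : ℕ} (h : n < m) : bker x a n m = 0 := if_neg (by omega)

/-- The Bailey lemma, for a single column of the kernel. -/
theorem bailey_step (hx : ∀ n, poch x x n ≠ 0) (a N m : ℕ) :
    ∑ s ∈ range (N + 1), x ^ (s ^ 2 + a * s) / poch x x (N - s) * bker x a s m
      = x ^ (m ^ 2 + a * m) * bker x a N m := by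
  rcases lt_or_ge N m with h | h
  · rw [bker_of_lt a h, mul_zero]
    refine Finset.sum_eq_zero fun s hs => ?_
    rw [Finset.mem_range] at hs
    rw [bker_of_lt a (by omega), mul_zero]
  obtain ⟨M, rfl⟩ := Nat.exists_eq_add_of_le h
  rw [add_assoc m M 1, Finset.sum_range_add, Finset.sum_eq_zero, zero_add]
  · have hV := q_vandermonde hx M (2 * m + a)
    rw [bker_of_le a h, Nat.add_sub_cancel_left, show m + M + m + a = M + (2 * m + a) by ring, ← hV,
      Finset.mul_sum]
    refine Finset.sum_congr rfl fun t ht => ?_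
    rw [bker_of_le a (Nat.le_add_right m t), Nat.add_sub_cancel_left, Nat.add_sub_add_left,
      show m + t + m + a = t + (2 * m + a) by ring,
      show (m + t) ^ 2 + a * (m + t) = (m ^ 2 + a * m) + t * (t + (2 * m + a)) by ring, pow_add]
    ring
  · intro s hs
    rw [Finset.mem_range] at hs
    rw [bker_of_lt a (by omega), mul_zero]

/-- Passage from the kernel relative to `x` to the kernel relative to `1`. -/
theorem bker_one_eq (hx : ∀ n, poch x x n ≠ 0) (n m : ℕ) :
    (1 - x ^ (2 * m + 1)) * bker x 1 n m = bker x 0 n m - x ^ (2 * m + 1) * bker x 0 n (m + 1) := by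
  rcases lt_trichotomy n m with h | rfl | h
  · simp [bker_of_lt _ h, bker_of_lt _ (show n < m + 1 by omega)]
  · rw [bker_of_le _ le_rfl, bker_of_le _ le_rfl, bker_of_lt _ (Nat.lt_succ_self n)]
    have h2 := poch_self_succ x (n + n)
    have h1 := hx (n + n + 1)
    rw [h2] at h1
    have h3 := hx (n + n)
    have h4 := right_ne_zero_of_mul h1
    rw [h2, Nat.sub_self, poch_zero, ← two_mul] at *
    simp only [add_zero, one_mul, mul_zero, sub_zero]
    field_simp
  · obtain ⟨r, rfl⟩ := Nat.exists_eq_add_of_lt h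
    rw [bker_of_le _ (by omega), bker_of_le _ (by omega), bker_of_le _ (by omega),
      show m + r + 1 - m = r + 1 by omega, show m + r + 1 - (m + 1) = r by omega,
      show m + r + 1 + (m + 1) + 0 = m + r + 1 + m + 1 by ring, add_zero]
    have h1 := hx r
    have h2 := hx (r + 1)
    have h3 := hx (m + r + 1 + m)
    have h4 := hx (m + r + 1 + m + 1)
    rw [poch_self_succ] at h2 h4
    rw [poch_self_succ x r, poch_self_succ x (m + r + 1 + m)]
    have h5 := right_ne_zero_of_mul h2
    have h6 := right_ne_zero_of_mul h4
    field_simp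
    ring

/-- The unit Bailey pair relative to `x`. The sum telescopes. -/
theorem unit_bailey (hx : ∀ n, poch x x n ≠ 0) (n : ℕ) :
    ∑ m ∈ range (n + 1), (-1) ^ m * x ^ m.choose 2 * (1 - x ^ (2 * m + 1)) * bker x 1 n m
      = if n = 0 then 1 else 0 := by
  rcases n with _ | n
  · have h1 := hx 1
    simp only [poch, Finset.range_one, Finset.prod_singleton, pow_zero, mul_one] at h1
    simp [bker, poch_self_succ, poch_zero, h1]
  rw [if_neg (Nat.succ_ne_zero n)]
  have h0 : (1 - x ^ (n + 1)) ≠ 0 := by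
    have := hx (n + 1)
    rw [poch_self_succ] at this
    exact right_ne_zero_of_mul this
  -- the tail of the sum from `m` on
  set T : ℕ → LaurentSeries ℚ := fun m =>
    (-1) ^ m * x ^ m.choose 2 * (1 - x ^ m) / (1 - x ^ (n + 1)) * bker x 0 (n + 1) m with hT
  have hstep : ∀ m ∈ range (n + 1 + 1), (-1) ^ m * x ^ m.choose 2 * (1 - x ^ (2 * m + 1)) *
      bker x 1 (n + 1) m = T m - T (m + 1) := by
    intro m hm
    rw [Finset.mem_range] at hm
    simp only [hT]
    rcases (show m ≤ n + 1 by omega).eq_or_lt with rfl | h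
    · rw [bker_of_lt 0 (Nat.lt_succ_self _), mul_zero, sub_zero, mul_assoc, bker_one_eq hx,
        bker_of_lt 0 (Nat.lt_succ_self _)]
      field_simp
      simp
    · obtain ⟨r, rfl⟩ := Nat.exists_eq_add_of_le (show m ≤ n by omega)
      rw [bker_of_le _ (by omega), bker_of_le _ (by omega), bker_of_le _ (by omega),
        show m + r + 1 - m = r + 1 by omega, show m + r + 1 - (m + 1) = r by omega,
        show m + r + 1 + (m + 1) + 0 = m + r + 1 + m + 1 by ring, add_zero, choose_two_succ]
      have h1 := hx r
      have h2 := hx (r + 1)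
      have h3 := hx (m + r + 1 + m)
      have h4 := hx (m + r + 1 + m + 1)
      rw [poch_self_succ] at h2 h4
      rw [poch_self_succ x r, poch_self_succ x (m + r + 1 + m)]
      have h5 := right_ne_zero_of_mul h2
      have h6 := right_ne_zero_of_mul h4
      field_simp
      ring
  rw [Finset.sum_congr rfl hstep, Finset.sum_range_sub']
  simp [hT, bker_of_lt 0 (Nat.lt_succ_self (n + 1))]

/-- Reversal of a finite product: if `w = 1 / (y x^(n-1))`, the factors of `(w;x)_n` are, in reverse
order, `-(1 - y x^j) / (y x^j)`. -/
theorem poch_reflect (hx0 : x ≠ 0) (n : ℕ) (w y : LaurentSeries ℚ) (h : w * y * x ^ n = x) :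
    (-1) ^ n * y ^ n * x ^ n.choose 2 * poch w x n = poch y x n := by
  induction n generalizing w with
  | zero => simp [poch_zero]
  | succ n ih =>
    have h1 : w * y * x ^ n = 1 := by
      apply mul_right_cancel₀ hx0
      linear_combination h
    have h2 := ih (w * x) (by linear_combination h)
    rw [poch_succ', choose_two_succ, show poch y x (n + 1) = poch y x n * (1 - y * x ^ n) by
      rw [poch, Finset.prod_range_succ, ← poch], ← h2]
    linear_combination (-1) ^ n * y ^ n * x ^ n.choose 2 * poch (w * x) x n * h1

/-- The monomial of the `q`-binomial theorem at index `r = n - m`, where `n = m + r`, after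
multiplication by the factor from `poch_reflect`. -/
theorem jacobi_low (hx0 : x ≠ 0) (m r : ℕ) (w y : LaurentSeries ℚ) (h : w * y * x ^ (m + r) = x) :
    y ^ (m + r) * x ^ (m + r).choose 2 * (x ^ r.choose 2 * w ^ r) = y ^ m * x ^ m.choose 2 := by
  apply mul_right_cancel₀ (pow_ne_zero r hx0)
  have h2 := two_mul_choose_two r
  have h3 : x ^ (m + r).choose 2 * x ^ r.choose 2 * x ^ r
      = x ^ m.choose 2 * (x ^ (m + r)) ^ r := by
    rw [← pow_add, ← pow_add, ← pow_mul, ← pow_add, choose_two_add]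
    congr 1
    nlinarith
  nth_rewrite 5 [← h]
  rw [mul_pow, mul_pow, pow_add y]
  linear_combination y ^ m * y ^ r * w ^ r * h3

/-- The monomial of the `q`-binomial theorem at index `n + 1 + m`, after multiplication by the factor
from `poch_reflect`. -/
theorem jacobi_high (hx0 : x ≠ 0) (n m : ℕ) (w y z : LaurentSeries ℚ) (hw : w * x ^ n = z)
    (hz : z * y = x) :
    y ^ n * x ^ n.choose 2 * (x ^ (n + 1 + m).choose 2 * w ^ (n + 1 + m))
      = y ^ m * x ^ m.choose 2 * z ^ (2 * m + 1) := by
  apply mul_right_cancel₀ (pow_ne_zero n hx0)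
  have h2 := two_mul_choose_two n
  have h3 : x ^ n.choose 2 * x ^ (n + 1 + m).choose 2 * x ^ n
      = x ^ m.choose 2 * x ^ m * (x ^ n) ^ (n + 1 + m) := by
    rw [← pow_add, ← pow_add, ← pow_mul, ← pow_add, ← pow_add,
      show n + 1 + m = n + (m + 1) by ring, choose_two_add n, choose_two_succ m]
    congr 1
    nlinarith
  calc _ = y ^ n * w ^ (n + 1 + m) * (x ^ n.choose 2 * x ^ (n + 1 + m).choose 2 * x ^ n) := by ring
    _ = y ^ n * x ^ m.choose 2 * x ^ m * (w * x ^ n) ^ (n + 1 + m) := by rw [h3, mul_pow]; ring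
    _ = x ^ m.choose 2 * x ^ m * (z * y) ^ n * z ^ (m + 1) := by rw [hw, mul_pow]; ring
    _ = x ^ m.choose 2 * (z * y) ^ m * x ^ n * z ^ (m + 1) := by rw [hz]
    _ = _ := by rw [mul_pow]; ring

/-- A finite form of the Jacobi triple product, with the bilateral sum folded to `m ≥ 0`. -/
theorem finite_jacobi (hx : ∀ n, poch x x n ≠ 0) (hx0 : x ≠ 0) {y z : LaurentSeries ℚ}
    (hz : z * y = x) (n : ℕ) :
    ∑ m ∈ range (n + 1), (-1) ^ m * y ^ m * x ^ m.choose 2 * (1 - z ^ (2 * m + 1)) *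
        (poch x x (2 * n + 1) * bker x 1 n m)
      = poch z x (n + 1) * poch y x n := by
  -- `(w;x)_{2n+1}` with `w = z / x^n` splits as `(w;x)_n (z;x)_{n+1}`; indices `n - m` and
  -- `n + 1 + m` of its expansion have the same Gaussian binomial and are paired
  obtain ⟨w, hw⟩ : ∃ w, w * x ^ n = z := ⟨z / x ^ n, div_mul_cancel₀ _ (pow_ne_zero n hx0)⟩
  have hwy : w * y * x ^ n = x := by
    linear_combination y * hw + hz
  have h1 := poch_reflect hx0 n w y hwy
  have h2 := q_binomial x w (n + (n + 1))
  rw [poch_add, hw] at h2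
  rw [← h1, show ∀ a b c : LaurentSeries ℚ, a * (b * c) = b * (c * a) by intros; ring, h2,
    show n + (n + 1) + 1 = (n + 1) + (n + 1) by ring, Finset.sum_range_add _ (n + 1) (n + 1),
    ← Finset.sum_range_reflect (fun k => (-1) ^ k * x ^ k.choose 2 * w ^ k * qb x (n + (n + 1)) k),
    ← Finset.sum_add_distrib, Finset.mul_sum]
  refine Finset.sum_congr rfl fun m hm => ?_
  rw [Finset.mem_range] at hm
  obtain ⟨r, rfl⟩ := Nat.exists_eq_add_of_le (show m ≤ n by omega)
  have hs1 : (-1 : LaurentSeries ℚ) ^ (m + r) * (-1) ^ r = (-1) ^ m := by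
    rw [pow_add, mul_assoc, ← mul_pow]; simp
  have hs2 : (-1 : LaurentSeries ℚ) ^ (m + r) * (-1) ^ (m + r + 1 + m) = -(-1) ^ m := by
    rw [show m + r + 1 + m = (m + r) + (m + 1) by ring, pow_add _ (m + r) (m + 1), ← mul_assoc,
      ← mul_pow]
    simp [pow_succ]
  have e1 := jacobi_low hx0 m r w y hwy
  have e2 := jacobi_high hx0 (m + r) m w y z hw hz
  have q1 : qb x (m + r + (m + r + 1)) r = poch x x (2 * (m + r) + 1) * bker x 1 (m + r) m := by
    rw [qb_eq_div hx (by omega), bker_of_le _ (by omega), Nat.add_sub_cancel_left,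
      show m + r + (m + r + 1) - r = m + r + m + 1 by omega, mul_one_div,
      show m + r + (m + r + 1) = 2 * (m + r) + 1 by ring]
  have q2 : qb x (m + r + (m + r + 1)) (m + r + 1 + m)
      = poch x x (2 * (m + r) + 1) * bker x 1 (m + r) m := by
    rw [qb_eq_div hx (by omega), bker_of_le _ (by omega), Nat.add_sub_cancel_left,
      show m + r + (m + r + 1) - (m + r + 1 + m) = r by omega, mul_one_div,
      show m + r + (m + r + 1) = 2 * (m + r) + 1 by ring,
      mul_comm (poch x x r), show m + r + 1 + m = m + r + m + 1 by ring]
  rw [show m + r + 1 - 1 - m = r by omega, q1, q2]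
  generalize poch x x (2 * (m + r) + 1) * bker x 1 (m + r) m = C
  calc _ = C * ((-1) ^ m * (y ^ m * x ^ m.choose 2)
        + -(-1) ^ m * (y ^ m * x ^ m.choose 2 * z ^ (2 * m + 1))) := by ring
    _ = _ := by rw [← hs2, ← e2, ← e1, ← hs1]; ring

end Algebra

/-! ### The Bailey chain -/

section BaileyChain

variable {x : LaurentSeries ℚ}

/-- The iterated Bailey sum with `m` summation variables bounded by `N`; the weight `e j` is the
coefficient of the linear term of the `j`-th variable, counted from the outermost one. -/
def chain (x : LaurentSeries ℚ) : ℕ → (ℕ → ℕ) → ℕ → LaurentSeries ℚ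
  | 0, _, N => 1 / poch x x N
  | m + 1, e, N => ∑ s ∈ range (N + 1),
      x ^ (s ^ 2 + e 0 * s) / poch x x (N - s) * chain x m (fun j => e (j + 1)) s

/-- The Bailey lemma for a sequence expanded in the kernel and its shift. -/
theorem bailey_lemma (hx : ∀ n, poch x x n ≠ 0) (a L : ℕ) (β c d : ℕ → LaurentSeries ℚ)
    (h : ∀ s ≤ L, β s = ∑ r ∈ range (L + 1), (c r * bker x a s r - d r * bker x a s (r + 1)))
    {n : ℕ} (hn : n ≤ L) :
    ∑ s ∈ range (n + 1), x ^ (s ^ 2 + a * s) / poch x x (n - s) * β s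
      = ∑ r ∈ range (L + 1), (c r * x ^ (r ^ 2 + a * r) * bker x a n r
          - d r * x ^ ((r + 1) ^ 2 + a * (r + 1)) * bker x a n (r + 1)) := by
  have h1 : ∀ s ∈ range (n + 1), x ^ (s ^ 2 + a * s) / poch x x (n - s) * β s
      = ∑ r ∈ range (L + 1), (c r * (x ^ (s ^ 2 + a * s) / poch x x (n - s) * bker x a s r)
          - d r * (x ^ (s ^ 2 + a * s) / poch x x (n - s) * bker x a s (r + 1))) := by
    intro s hs
    rw [Finset.mem_range] at hs
    rw [h s (by omega), Finset.mul_sum]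
    exact Finset.sum_congr rfl fun r _ => by ring
  rw [Finset.sum_congr rfl h1, Finset.sum_comm]
  refine Finset.sum_congr rfl fun r _ => ?_
  rw [Finset.sum_sub_distrib, ← Finset.mul_sum, ← Finset.mul_sum, bailey_step hx, bailey_step hx]
  ring

/-- The unit Bailey pair after `P + 1` steps with `a = 1`: the `0`-th sum `1 / (x;x)_n` is itself
one such step applied to `δ_{n,0}`. -/
theorem chain_one (hx : ∀ n, poch x x n ≠ 0) (P L : ℕ) : ∀ n ≤ L,
    chain x P (fun _ => 1) n = ∑ r ∈ range (L + 1), (-1) ^ r * x ^ r.choose 2 *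
      x ^ ((P + 1) * (r ^ 2 + r)) * (1 - x ^ (2 * r + 1)) * bker x 1 n r := by
  induction P with
  | zero =>
    intro n hn
    have h0 : ∀ s ≤ L, (if s = 0 then (1 : LaurentSeries ℚ) else 0) = ∑ r ∈ range (L + 1),
        ((-1) ^ r * x ^ r.choose 2 * (1 - x ^ (2 * r + 1)) * bker x 1 s r
          - 0 * bker x 1 s (r + 1)) := by
      intro s hs
      rw [← unit_bailey hx s]
      simp only [zero_mul, sub_zero]
      refine Finset.sum_subset (Finset.range_subset_range.mpr (by omega)) fun r _ hr => ?_
      rw [Finset.mem_range, not_lt] at hr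
      rw [bker_of_lt 1 (by omega), mul_zero]
    have h := bailey_lemma hx 1 L _ _ (fun _ => 0) h0 hn
    rw [Finset.sum_range_succ'] at h
    simp only [Nat.succ_ne_zero, if_false, mul_zero, Finset.sum_const_zero, zero_add, if_true,
      zero_mul, sub_zero, mul_one, one_mul] at h
    rw [chain]
    rw [show (0 : ℕ) ^ 2 + 0 = 0 by norm_num, pow_zero, Nat.sub_zero] at h
    rw [h]
    refine Finset.sum_congr rfl fun r _ => ?_
    rw [zero_add, one_mul]
    ring
  | succ P ih =>
    intro n hn
    have h := bailey_lemma hx 1 L (chain x P fun _ => 1) (fun r => (-1) ^ r * x ^ r.choose 2 *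
      x ^ ((P + 1) * (r ^ 2 + r)) * (1 - x ^ (2 * r + 1))) (fun _ => 0)
      (fun s hs => by rw [ih s hs]; simp) hn
    rw [chain, h]
    refine Finset.sum_congr rfl fun r _ => ?_
    rw [show (P + 1 + 1) * (r ^ 2 + r) = (P + 1) * (r ^ 2 + r) + (r ^ 2 + 1 * r) by ring, pow_add]
    ring

/-- `P` steps relative to `x`, then a change of kernel by `bker_one_eq`, then `u` steps relative to
`1`. The first `u` (outermost) variables carry no linear weight. -/
theorem chain_eq (hx : ∀ n, poch x x n ≠ 0) (P u L : ℕ) : ∀ n ≤ L,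
    chain x (P + u) (fun j => if u ≤ j then 1 else 0) n = ∑ r ∈ range (L + 1),
      ((-1) ^ r * x ^ r.choose 2 * x ^ ((P + 1) * (r ^ 2 + r)) * x ^ (u * r ^ 2) * bker x 0 n r
        - (-1) ^ r * x ^ r.choose 2 * x ^ ((P + 1) * (r ^ 2 + r)) *
          x ^ (2 * r + 1 + u * (r + 1) ^ 2) * bker x 0 n (r + 1)) := by
  induction u with
  | zero =>
    intro n hn
    simp only [Nat.zero_le, if_true, add_zero]
    rw [chain_one hx P L n hn]
    refine Finset.sum_congr rfl fun r _ => ?_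
    rw [mul_assoc _ (1 - x ^ (2 * r + 1)), bker_one_eq hx]
    ring
  | succ u ih =>
    intro n hn
    have h := bailey_lemma hx 0 L _ _ _ ih hn
    rw [← add_assoc, chain]
    simp only [Nat.add_le_add_iff_right, Nat.le_zero_eq, Nat.succ_ne_zero, if_false]
    rw [h]
    refine Finset.sum_congr rfl fun r _ => ?_
    ring

end BaileyChain

/-! ### Iterated sums as sums over antitone tuples -/

section Tuples

/-- The antitone tuples of length `m` with all entries at most `N`. -/
def tuples : (m : ℕ) → ℕ → Finset (Fin m → ℕ)
  | 0, _ => {Fin.elim0}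
  | m + 1, N => (range (N + 1)).biUnion fun s =>
      (tuples m s).image fun t => (Fin.cons s t : Fin (m + 1) → ℕ)

theorem mem_tuples {m : ℕ} : ∀ {N : ℕ} {t : Fin m → ℕ},
    t ∈ tuples m N ↔ Antitone t ∧ ∀ j, t j ≤ N := by
  induction m with
  | zero =>
    intro N t
    simp only [tuples, Finset.mem_singleton]
    exact ⟨fun _ => ⟨fun a => a.elim0, fun a => a.elim0⟩, fun _ => Subsingleton.elim _ _⟩
  | succ m ih =>
    intro N t
    simp only [tuples, Finset.mem_biUnion, Finset.mem_range, Finset.mem_image, ih]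
    constructor
    · rintro ⟨s, hs, t, ⟨ht, hts⟩, rfl⟩
      refine ⟨fun a b hab => ?_, fun j => ?_⟩
      · induction a using Fin.cases with
        | zero =>
          induction b using Fin.cases with
          | zero => exact le_rfl
          | succ b => simpa using hts b
        | succ a =>
          induction b using Fin.cases with
          | zero => simp at hab
          | succ b => simpa using ht (by simpa using hab)
      · induction j using Fin.cases with
        | zero => simpa using Nat.lt_succ_iff.mp hs
        | succ j => simpa using (hts j).trans (Nat.lt_succ_iff.mp hs)
    · rintro ⟨ht, htN⟩
      refine ⟨t 0, Nat.lt_succ_iff.mpr (htN 0), Fin.tail t, ⟨fun a b hab => ?_, fun j => ?_⟩,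
        Fin.cons_self_tail t⟩
      · exact ht (Fin.succ_le_succ_iff.mpr hab)
      · exact ht (Fin.zero_le _)

theorem sum_tuples_succ {m : ℕ} (N : ℕ) (f : (Fin (m + 1) → ℕ) → LaurentSeries ℚ) :
    ∑ t ∈ tuples (m + 1) N, f t
      = ∑ s ∈ range (N + 1), ∑ t ∈ tuples m s, f (Fin.cons s t) := by
  rw [tuples, Finset.sum_biUnion]
  · refine Finset.sum_congr rfl fun s _ => ?_
    rw [Finset.sum_image]
    intro t _ t' _ h
    exact Fin.cons_right_injective (α := fun _ => ℕ) s h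
  · intro s _ s' _ hss
    rw [Function.onFun, Finset.disjoint_left]
    intro t ht ht'
    obtain ⟨a, _, rfl⟩ := Finset.mem_image.mp ht
    obtain ⟨b, _, hb⟩ := Finset.mem_image.mp ht'
    exact hss (by simpa using (congrFun hb 0).symm)

/-- The first entry of a tuple, with value `0` for the empty tuple. -/
def head {m : ℕ} (t : Fin m → ℕ) : ℕ := if h : 0 < m then t ⟨0, h⟩ else 0

theorem head_cons {m : ℕ} (a : ℕ) (t : Fin m → ℕ) : head (Fin.cons a t : Fin (m + 1) → ℕ) = a := by
  simp [head]

theorem next_cons_zero {m : ℕ} (a : ℕ) (t : Fin m → ℕ) :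
    next (Fin.cons a t : Fin (m + 1) → ℕ) 0 = head t := by
  unfold next head
  by_cases h : 0 < m
  · rw [dif_pos (by simpa using h), dif_pos h]
    exact Fin.cons_succ (α := fun _ => ℕ) a t ⟨0, h⟩
  · rw [dif_neg (by simpa using h), dif_neg h]

theorem next_cons_succ {m : ℕ} (a : ℕ) (t : Fin m → ℕ) (j : Fin m) :
    next (Fin.cons a t : Fin (m + 1) → ℕ) j.succ = next t j := by
  unfold next
  by_cases h : (j : ℕ) + 1 < m
  · rw [dif_pos (by simpa using h), dif_pos h]
    exact Fin.cons_succ (α := fun _ => ℕ) a t ⟨j + 1, h⟩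
  · rw [dif_neg (by simpa using h), dif_neg h]

/-- The summand of the Andrews–Gordon multisum with linear weights `e`. -/
def agTerm (x : LaurentSeries ℚ) {m : ℕ} (e : ℕ → ℕ) (t : Fin m → ℕ) : LaurentSeries ℚ :=
  x ^ ((∑ j : Fin m, t j ^ 2) + ∑ j : Fin m, e j * t j) /
    ∏ j : Fin m, poch x x (t j - next t j)

theorem agTerm_cons (x : LaurentSeries ℚ) {m : ℕ} (e : ℕ → ℕ) (s : ℕ) (t : Fin m → ℕ) :
    agTerm x e (Fin.cons s t : Fin (m + 1) → ℕ)
      = x ^ (s ^ 2 + e 0 * s) * (agTerm x (fun j => e (j + 1)) t / poch x x (s - head t)) := by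
  unfold agTerm
  rw [Fin.sum_univ_succ, Fin.sum_univ_succ, Fin.prod_univ_succ]
  simp only [Fin.cons_zero, Fin.cons_succ, next_cons_zero, next_cons_succ, Fin.val_zero,
    Fin.val_succ]
  rw [add_add_add_comm, pow_add, div_div, mul_div_assoc,
    mul_comm (poch x x (s - head t))]

/-- The iterated Bailey sum, written as a sum over tuples. -/
theorem chain_eq_sum (x : LaurentSeries ℚ) (m : ℕ) : ∀ (e : ℕ → ℕ) (N : ℕ),
    chain x m e N = ∑ t ∈ tuples m N, agTerm x e t * (1 / poch x x (N - head t)) := by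
  induction m with
  | zero =>
    intro e N
    simp [chain, tuples, agTerm, head]
  | succ m ih =>
    intro e N
    rw [chain, sum_tuples_succ]
    refine Finset.sum_congr rfl fun s _ => ?_
    rw [ih, Finset.mul_sum]
    refine Finset.sum_congr rfl fun t _ => ?_
    rw [agTerm_cons, head_cons]
    ring

end Tuples

/-! ### Passage to the limit -/

section Limits

variable {c d : ℕ}

theorem poch_self_ne_zero (hd : 1 ≤ d) (n : ℕ) : poch (q ^ d) (q ^ d) n ≠ 0 :=
  ne_zero_of_v_eq_one (v_poch hd hd n)

theorem v_neg_one_pow (m : ℕ) : Valued.v ((-1 : LaurentSeries ℚ) ^ m) = 1 := by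
  rw [map_pow, Valuation.map_neg, map_one, one_pow]

/-- The kernel tends to `1 / (Q;Q)_∞ ^ 2`. The subtraction `n - m` is truncated: for `m > n` the
claim is only that the difference is a power series. -/
theorem bker_sub_mem (hd : 1 ≤ d) (a n m : ℕ) :
    bker (q ^ d) a n m - (1 / pochInf (q ^ d) (q ^ d)) ^ 2 ∈ van (n - m) := by
  have hP := v_pochInf hd hd
  rcases lt_or_ge n m with h | h
  · rw [bker_of_lt a h, Nat.sub_eq_zero_of_le h.le, zero_sub]
    apply (van 0).neg_mem
    apply mem_van_zero_of_v_eq_one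
    rw [map_pow, map_div₀, hP, map_one, div_one, one_pow]
  · rw [bker_of_le a h, one_div, one_div, inv_pow, sq]
    refine inv_sub_inv_mem ?_ ?_ (mul_sub_mul_mem (v_poch hd hd _) hP ?_ ?_)
    · rw [map_mul, v_poch hd hd, v_poch hd hd, one_mul]
    · rw [map_mul, hP, one_mul]
    · exact van_anti (by omega) (poch_sub_pochInf_mem hd hd _)
    · exact van_anti (by omega) (poch_sub_pochInf_mem hd hd _)

/-- The Jacobi triple product `(z, y, Q; Q)_∞` with `zy = Q`, as a sum folded to `m ≥ 0`. -/
theorem jacobi_triple {a b : ℕ} (ha : 1 ≤ a) (hb : 1 ≤ b) :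
    pochInf (q ^ a) (q ^ (a + b)) * pochInf (q ^ b) (q ^ (a + b)) *
        pochInf (q ^ (a + b)) (q ^ (a + b))
      = ∑' m : ℕ, (-1) ^ m * (q ^ b) ^ m * (q ^ (a + b)) ^ m.choose 2 *
          (1 - (q ^ a) ^ (2 * m + 1)) := by
  have hd : 1 ≤ a + b := by omega
  set P := pochInf (q ^ (a + b)) (q ^ (a + b)) with hPdef
  have hP : Valued.v P = 1 := v_pochInf hd hd
  have hP0 := ne_zero_of_v_eq_one hP
  set f : ℕ → LaurentSeries ℚ := fun m => (-1) ^ m * (q ^ b) ^ m * (q ^ (a + b)) ^ m.choose 2 *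
          (1 - (q ^ a) ^ (2 * m + 1)) with hf
  have hfm : ∀ m, f m ∈ van m := by
    intro m
    have h1 : (q ^ b) ^ m ∈ van m := by
      rw [← pow_mul]
      exact van_anti (by nlinarith) (q_pow_mem_van _)
    have h2 : (q ^ (a + b)) ^ m.choose 2 ∈ van 0 := by
      rw [← pow_mul]
      exact van_anti (Nat.zero_le _) (q_pow_mem_van _)
    have h3 : Valued.v (1 - (q ^ a) ^ (2 * m + 1)) = 1 := by
      rw [← pow_mul]
      exact v_one_sub (by nlinarith) (q_pow_mem_van _)
    simpa using mul_mem_van (mul_mem_van (mul_mem_van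
      (mem_van_zero_of_v_eq_one (v_neg_one_pow m)) h1) h2) (mem_van_zero_of_v_eq_one h3)
  have hT := tendsto_tannery (F := fun n => range (n + 1))
    (tendsto_finset_range.comp (tendsto_add_atTop_nat 1)) (summable_of_mem_van hfm)
    (P * (1 / P) ^ 2)
    (fun n m => f m * (poch (q ^ (a + b)) (q ^ (a + b)) (2 * n + 1) * bker (q ^ (a + b)) 1 n m))
    (by
      intro n m hm
      rw [Finset.mem_range] at hm
      rw [← mul_sub]
      refine van_anti (by omega) (mul_mem_van (n := n - m) (hfm m) ?_)
      refine mul_sub_mul_mem (v_poch hd hd _) ?_ ?_ (bker_sub_mem hd 1 n m)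
      · rw [map_pow, map_div₀, hP, map_one, div_one, one_pow]
      · exact van_anti (by omega) (poch_sub_pochInf_mem hd hd _))
  have hL : Tendsto (fun n => poch (q ^ a) (q ^ (a + b)) (n + 1) * poch (q ^ b) (q ^ (a + b)) n)
      atTop (𝓝 (pochInf (q ^ a) (q ^ (a + b)) * pochInf (q ^ b) (q ^ (a + b)))) :=
    ((tendsto_poch ha hd).comp (tendsto_add_atTop_nat 1)).mul (tendsto_poch hb hd)
  have hE := tendsto_nhds_unique hL (hT.congr fun n => finite_jacobi
    (poch_self_ne_zero hd) (pow_ne_zero _ q_ne_zero) (pow_add q a b).symm n)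
  rw [hE]
  field_simp

theorem head_le_exponent {m : ℕ} (e : ℕ → ℕ) (t : Fin m → ℕ) :
    head t ≤ (∑ j : Fin m, t j ^ 2) + ∑ j : Fin m, e j * t j := by
  unfold head
  split_ifs with h
  · refine le_trans (Nat.le_self_pow two_ne_zero _) (le_trans ?_ (Nat.le_add_right _ _))
    exact Finset.single_le_sum (f := fun j => t j ^ 2) (fun _ _ => Nat.zero_le _)
      (Finset.mem_univ _)
  · exact Nat.zero_le _

theorem agTerm_mem {m : ℕ} (e : ℕ → ℕ) (t : Fin m → ℕ) : agTerm q e t ∈ van (head t) := by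
  have h : Valued.v (∏ j : Fin m, poch q q (t j - next t j)) = 1 := by
    rw [map_prod]
    refine Finset.prod_eq_one fun j _ => ?_
    simpa using v_poch le_rfl le_rfl (t j - next t j)
  have h2 := van_anti (head_le_exponent e t) (q_pow_mem_van _)
  rw [mem_van] at h2 ⊢
  rw [agTerm, map_div₀, h, div_one]
  exact h2

theorem mem_tuples_of_head {m N : ℕ} {t : Fin m → ℕ} (ht : Antitone t) (h : head t ≤ N) :
    t ∈ tuples m N := by
  refine mem_tuples.mpr ⟨ht, fun j => le_trans ?_ h⟩
  have hm : 0 < m := lt_of_le_of_lt (Nat.zero_le _) j.2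
  rw [head, dif_pos hm]
  exact ht (Fin.mk_le_of_le_val (Nat.zero_le _))

theorem head_le_of_mem {m N : ℕ} {t : Fin m → ℕ} (h : t ∈ tuples m N) : head t ≤ N := by
  unfold head
  split_ifs with hm
  · exact (mem_tuples.mp h).2 _
  · exact Nat.zero_le _

theorem summable_agTerm (m : ℕ) (e : ℕ → ℕ) :
    Summable fun t : {t : Fin m → ℕ // Antitone t} => agTerm q e t.1 := by
  apply NonarchimedeanAddGroup.summable_of_tendsto_cofinite_zero
  rw [tendsto_iff_van]
  intro n
  rw [eventually_cofinite]
  refine ((tuples m n).subtype Antitone).finite_toSet.subset fun t ht => ?_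
  rw [Set.mem_ofPred_eq, sub_zero] at ht
  rw [Finset.mem_coe, Finset.mem_subtype]
  refine mem_tuples_of_head t.2 ?_
  by_contra hlt
  exact ht (van_anti (not_le.mp hlt).le (agTerm_mem e t.1))

theorem tendsto_tuples (m : ℕ) :
    Tendsto (fun n => (tuples m n).subtype Antitone) atTop atTop := by
  apply tendsto_atTop_finset_of_monotone
  · intro a b hab t ht
    rw [Finset.mem_subtype] at ht ⊢
    exact mem_tuples_of_head t.2 ((head_le_of_mem ht).trans hab)
  · intro t
    exact ⟨head t.1, Finset.mem_subtype.mpr (mem_tuples_of_head t.2 le_rfl)⟩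

/-- The extra factor `1 / (q;q)_∞` is the limit of the outermost `1 / (q;q)_{N - N_1}`. The error
terms have order at least `N_1 + (N - N_1)`, so the convergence is uniform. -/
theorem tendsto_chain (m : ℕ) (e : ℕ → ℕ) :
    Tendsto (chain q m e) atTop
      (𝓝 ((∑' t : {t : Fin m → ℕ // Antitone t}, agTerm q e t.1) * (1 / pochInf q q))) := by
  have hT := tendsto_tannery (tendsto_tuples m) (summable_agTerm m e) (1 / pochInf q q)
    (fun n t => agTerm q e t.1 * (1 / poch q q (n - head t.1))) (by
      intro n t ht
      rw [Finset.mem_subtype] at ht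
      have hh := head_le_of_mem ht
      rw [← mul_sub]
      refine van_anti (by omega) (mul_mem_van (n := n - head t.1) (agTerm_mem e t.1) ?_)
      have h1 := v_poch (c := 1) (d := 1) le_rfl le_rfl (n - head t.1)
      have h2 := v_pochInf (c := 1) (d := 1) le_rfl le_rfl
      have h3 := poch_sub_pochInf_mem (c := 1) (d := 1) le_rfl le_rfl (n - head t.1)
      rw [pow_one] at h1 h2 h3
      rw [one_div, one_div]
      exact van_anti (by omega) (inv_sub_inv_mem h1 h2 h3))
  refine hT.congr fun n => ?_
  rw [chain_eq_sum, Finset.sum_subtype_of_mem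
    (f := fun t => agTerm q e t * (1 / poch q q (n - head t)))]
  exact fun t ht => (mem_tuples.mp ht).1

/-- The Andrews–Gordon multisum as a simple sum, before the triple product is
applied. -/
theorem agSum_eq (P u : ℕ) :
    (∑' t : {t : Fin (P + u) → ℕ // Antitone t},
        agTerm q (fun j => if u ≤ j then 1 else 0) t.1) * (1 / pochInf q q)
      = (∑' r : ℕ, (-1) ^ r * q ^ r.choose 2 * q ^ ((P + 1) * (r ^ 2 + r)) *
          (q ^ (u * r ^ 2) - q ^ (2 * r + 1 + u * (r + 1) ^ 2))) * (1 / pochInf q q) ^ 2 := by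
  -- order bound for each half of the `r`-th summand
  have hk : ∀ r e s : ℕ, s ≤ r + e →
      (-1) ^ r * q ^ r.choose 2 * q ^ ((P + 1) * (r ^ 2 + r)) * q ^ e ∈ van s := by
    intro r e s hs
    have h := mul_mem_van (mem_van_zero_of_v_eq_one (v_neg_one_pow r))
      (q_pow_mem_van (r.choose 2 + (P + 1) * (r ^ 2 + r) + e))
    rw [pow_add, pow_add, ← mul_assoc, ← mul_assoc] at h
    exact van_anti (by nlinarith [Nat.zero_le (P * (r ^ 2 + r))]) h
  have hx : ∀ n, poch q q n ≠ 0 := by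
    simpa using poch_self_ne_zero (d := 1) le_rfl
  have hb : ∀ n r, bker q 0 n r - (1 / pochInf q q) ^ 2 ∈ van (n - r) := by
    simpa using bker_sub_mem (d := 1) le_rfl 0
  refine tendsto_nhds_unique (tendsto_chain _ _) ?_
  refine Tendsto.congr (fun n => (chain_eq hx P u n n le_rfl).symm) ?_
  refine tendsto_tannery (F := fun n => range (n + 1))
    (tendsto_finset_range.comp (tendsto_add_atTop_nat 1)) (summable_of_mem_van ?_) _ _ ?_
  · intro r
    rw [mul_sub]
    exact (van r).sub_mem (hk _ _ _ (by omega)) (hk _ _ _ (by omega))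
  · intro n r hr
    have h1 := mul_mem_van (hk r (u * r ^ 2) r (by omega)) (hb n r)
    have h2 := mul_mem_van (hk r (2 * r + 1 + u * (r + 1) ^ 2) (r + 1) (by omega)) (hb n (r + 1))
    convert (van n).sub_mem (van_anti (by omega) h1) (van_anti (by omega) h2) using 1
    ring

end Limits

theorem andrews_gordon (k i : ℕ) (hi : 1 ≤ i) (hik : i ≤ k) :
    (∑' N : {N : Fin (k - 1) → ℕ // Antitone N},
      q ^ ((∑ j : Fin (k - 1), (N.1 j) ^ 2) + ∑ j : Fin (k - 1), if i ≤ (j : ℕ) + 1 then N.1 j else 0) /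
        ∏ j : Fin (k - 1), poch q q (N.1 j - next N.1 j))
    = pochInf (q ^ i) (q ^ (2 * k + 1)) * pochInf (q ^ (2 * k + 1 - i)) (q ^ (2 * k + 1)) *
        pochInf (q ^ (2 * k + 1)) (q ^ (2 * k + 1)) / pochInf q q := by
  obtain ⟨u, rfl⟩ := Nat.exists_eq_add_of_le' hi
  obtain ⟨P, rfl⟩ : ∃ P, k = P + u + 1 := ⟨k - (u + 1), by omega⟩
  have hP0 : pochInf q q ≠ 0 := by
    simpa using ne_zero_of_v_eq_one (v_pochInf (c := 1) (d := 1) le_rfl le_rfl)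
  have hJ := jacobi_triple (a := u + 1) (b := 2 * P + u + 2) (by omega) (by omega)
  rw [show u + 1 + (2 * P + u + 2) = 2 * (P + u + 1) + 1 by ring] at hJ
  rw [show 2 * (P + u + 1) + 1 - (u + 1) = 2 * P + u + 2 by omega, hJ]
  have hS := agSum_eq P u
  -- cancel one factor `1 / (q;q)_∞`
  rw [sq, ← mul_assoc] at hS
  have hS' := mul_right_cancel₀ (one_div_ne_zero hP0) hS
  rw [mul_one_div] at hS'
  rw [Nat.add_sub_cancel (P + u) 1]
  refine (tsum_congr fun t => ?_).trans (hS'.trans (congrArg (· / pochInf q q)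
    (tsum_congr fun r => ?_)))
  · simp only [agTerm, ite_mul, one_mul, zero_mul, Nat.add_le_add_iff_right]
  · have h2 := two_mul_choose_two r
    have e1 : (q ^ (2 * P + u + 2)) ^ r * (q ^ (2 * (P + u + 1) + 1)) ^ r.choose 2
        = q ^ r.choose 2 * q ^ ((P + 1) * (r ^ 2 + r)) * q ^ (u * r ^ 2) := by
      rw [← pow_mul, ← pow_mul, ← pow_add, ← pow_add, ← pow_add, ← h2]
      congr 1
      ring
    have e2 : q ^ (2 * r + 1 + u * (r + 1) ^ 2) = q ^ (u * r ^ 2) * (q ^ (u + 1)) ^ (2 * r + 1) := by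
      rw [← pow_mul, ← pow_add]
      congr 1
      ring
    rw [e2]
    linear_combination (-((-1) ^ r * (1 - (q ^ (u + 1)) ^ (2 * r + 1)))) * e1
end
end
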